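/- Let u be a monotone traveling wave solution of the balanced Allen-Cahn equation in the plane, and let Γ := {(x,y) ∈ ℝ² : u(x,y) = 0} be its zero level set. Then there exist constants C > 0 and ν > 0 such that for all (x,y) ∈ ℝ², |u(x,y)² − 1| + |∇u(x,y)| + |∇²u(x,y)| ≤ C e^{−ν · dist((x,y), Γ)}, where dist denotes the Euclidean distance to Γ. -/

import Mathlib

open Real Filter MeasureTheory Metric

noncomputable def pdx (u : ℝ → ℝ → ℝ) (x y : ℝ) : ℝ := deriv (fun t => u t y) x

noncomputable def pdy (u : ℝ → ℝ → ℝ) (x y : ℝ) : ℝ := deriv (fun t => u x t) y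

noncomputable def pdxx (u : ℝ → ℝ → ℝ) (x y : ℝ) : ℝ := deriv (fun t => pdx u t y) x

noncomputable def pdyy (u : ℝ → ℝ → ℝ) (x y : ℝ) : ℝ := deriv (fun t => pdy u x t) y

/-- `F` is a balanced double-well potential. -/
def BalancedDoubleWell (F : ℝ → ℝ) : Prop :=
  ContDiff ℝ 3 F ∧ deriv F (-1) = 0 ∧ deriv F 1 = 0 ∧
  0 < deriv (deriv F) (-1) ∧ 0 < deriv (deriv F) 1 ∧
  (∀ s ∈ Set.Ioo (-1 : ℝ) 0, 0 < deriv F s) ∧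
  (∀ s ∈ Set.Ioo (0 : ℝ) 1, deriv F s < 0) ∧
  F (-1) = 0 ∧ F 1 = 0

/-- `u` is a `C³` solution of `Δu + c uᵧ = F'(u)` on `ℝ²` with `|u| ≤ 1`
which is monotone in `y`. -/
def IsSolution (F : ℝ → ℝ) (c : ℝ) (u : ℝ → ℝ → ℝ) : Prop :=
  ContDiff ℝ 3 (fun p : ℝ × ℝ => u p.1 p.2) ∧
  (∀ x y : ℝ, pdxx u x y + pdyy u x y + c * pdy u x y = deriv F (u x y)) ∧
  (∀ x y : ℝ, |u x y| ≤ 1) ∧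
  (∀ x y : ℝ, 0 < pdy u x y)

/-- A monotone traveling wave solution connecting `-1` to `1`. -/
def IsTravelingWave (F : ℝ → ℝ) (c : ℝ) (u : ℝ → ℝ → ℝ) : Prop :=
  IsSolution F c u ∧
  (∀ x : ℝ, Tendsto (fun y => u x y) atTop (nhds 1)) ∧
  (∀ x : ℝ, Tendsto (fun y => u x y) atBot (nhds (-1)))

/-!
Testing the equation against `∂_y u` shows that the energy current
`(∂_x u ∂_y u, (∂_y u)² / 2 - (∂_x u)² / 2 - F(u))` has divergence `-c (∂_y u)²`. Since the two
wells have equal depth, its flux through the boundary of large boxes stays bounded, so `∂_y u` is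
square integrable, and interior gradient estimates give `∂_y u, ∂_y² u → 0` at infinity. Far from
the origin, therefore, `∂_x² u ≈ F'(u)`. If `u` takes a fixed value in `(-1, 0)` at such a point and
stays negative on a large ball around it, then along the horizontal line through the point `u` is
almost convex, and uniformly convex near the point, so it outgrows its bounds. Where `u` exceeds the
fixed value, sliding down in `y` reaches that value again. Hence `u` is uniformly close to `-1` deep
inside `{u < 0}`, and by reflection to `1` deep inside `{u > 0}`. There `F''(u) > 0`, so a `cosh`
barrier gives exponential decay of `1 - |u|`, which gradient estimates transfer to the derivatives.
-/

section DirectionalDerivatives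

variable {E E' : Type*} [NormedAddCommGroup E] [NormedSpace ℝ E] [NormedAddCommGroup E']
  [NormedSpace ℝ E']

/-- The derivative of `g` in the direction `e`, as a function of the base point. -/
noncomputable def dirDeriv (e : E) (g : E → ℝ) (p : E) : ℝ := fderiv ℝ g p e

theorem contDiff_dirDeriv {m n : WithTop ℕ∞} {g : E → ℝ} (hg : ContDiff ℝ n g) (hmn : m + 1 ≤ n)
    (e : E) : ContDiff ℝ m (dirDeriv e g) :=
  (hg.fderiv_right hmn).clm_apply contDiff_const

theorem dirDeriv_dirDeriv {g : E → ℝ} (hg : ContDiff ℝ 2 g) (a b p : E) :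
    dirDeriv a (dirDeriv b g) p = fderiv ℝ (fderiv ℝ g) p a b := by
  have hd : DifferentiableAt ℝ (fderiv ℝ g) p :=
    (hg.fderiv_right (m := 1) (by norm_num)).differentiable (by norm_num) p
  change fderiv ℝ (fun q => fderiv ℝ g q b) p a = _
  rw [fderiv_clm_apply hd (differentiableAt_const b)]
  simp

theorem dirDeriv_comm {g : E → ℝ} (hg : ContDiff ℝ 2 g) (a b : E) :
    dirDeriv a (dirDeriv b g) = dirDeriv b (dirDeriv a g) := by
  ext p
  rw [dirDeriv_dirDeriv hg, dirDeriv_dirDeriv hg]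
  exact (hg.contDiffAt.isSymmSndFDerivAt (by simp)).eq a b

theorem abs_dirDeriv_le {e : E} (he : ‖e‖ ≤ 1) (g : E → ℝ) (p : E) :
    |dirDeriv e g p| ≤ ‖fderiv ℝ g p‖ :=
  (fderiv ℝ g p).unit_le_opNorm e he

theorem hasDerivAt_comp_add_smul {g : E → ℝ} (hg : Differentiable ℝ g) (p e : E) (t : ℝ) :
    HasDerivAt (fun s : ℝ => g (p + s • e)) (dirDeriv e g (p + t • e)) t :=
  (hg _).hasFDerivAt.comp_hasDerivAt t
    (by simpa using ((hasDerivAt_id t).smul_const e).const_add p)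

theorem dirDeriv_add {g h : E → ℝ} (hg : Differentiable ℝ g) (hh : Differentiable ℝ h) (e : E) :
    dirDeriv e (fun p => g p + h p) = fun p => dirDeriv e g p + dirDeriv e h p := by
  ext p
  simp [dirDeriv, fderiv_fun_add (hg p) (hh p)]

theorem dirDeriv_sub {g h : E → ℝ} (hg : Differentiable ℝ g) (hh : Differentiable ℝ h) (e : E) :
    dirDeriv e (fun p => g p - h p) = fun p => dirDeriv e g p - dirDeriv e h p := by
  ext p
  simp [dirDeriv, fderiv_fun_sub (hg p) (hh p)]

theorem dirDeriv_sub_const (e : E) (g : E → ℝ) (a : ℝ) :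
    dirDeriv e (fun p => g p - a) = dirDeriv e g := by
  ext p
  simp [dirDeriv, fderiv_sub_const]

theorem dirDeriv_const_mul (e : E) (a : ℝ) (g : E → ℝ) :
    dirDeriv e (fun p => a * g p) = fun p => a * dirDeriv e g p := by
  ext p
  exact DFunLike.congr_fun (congrFun (fderiv_const_smul_field a) p) e

theorem dirDeriv_neg (e : E) (g : E → ℝ) :
    dirDeriv e (fun p => -g p) = fun p => -dirDeriv e g p := by
  ext p
  simp [dirDeriv, fderiv_fun_neg]

theorem dirDeriv_neg_left (e : E) (g : E → ℝ) : dirDeriv (-e) g = fun p => -dirDeriv e g p := by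
  ext p
  simp [dirDeriv]

theorem dirDeriv_mul {g h : E → ℝ} (hg : Differentiable ℝ g) (hh : Differentiable ℝ h) (e : E) :
    dirDeriv e (fun p => g p * h p) = fun p => g p * dirDeriv e h p + dirDeriv e g p * h p := by
  ext p
  simp [dirDeriv, fderiv_fun_mul (hg p) (hh p), mul_comm (h p)]

theorem dirDeriv_comp {φ φ' : ℝ → ℝ} {g : E → ℝ} (hφ : ∀ s, HasDerivAt φ (φ' s) s)
    (hg : Differentiable ℝ g) (e : E) :
    dirDeriv e (fun p => φ (g p)) = fun p => φ' (g p) * dirDeriv e g p := by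
  ext p
  exact DFunLike.congr_fun ((hφ (g p)).comp_hasFDerivAt p (hg p).hasFDerivAt).fderiv e

theorem dirDeriv_comp_equiv (A : E ≃L[ℝ] E') (e : E) (g : E' → ℝ) :
    dirDeriv e (fun p => g (A p)) = fun p => dirDeriv (A e) g (A p) := by
  ext p
  exact DFunLike.congr_fun (A.comp_right_fderiv (f := g) (x := p)) e

theorem dirDeriv_comp_const_add (a e : E) (g : E → ℝ) :
    dirDeriv e (fun p => g (a + p)) = fun p => dirDeriv e g (a + p) := by
  ext p
  simp [dirDeriv, fderiv_comp_add_left]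

end DirectionalDerivatives

open scoped Topology

local notation "∂₁" => dirDeriv ((1 : ℝ), (0 : ℝ))
local notation "∂₂" => dirDeriv ((0 : ℝ), (1 : ℝ))

section Plane

theorem dirDeriv_separated {φ φ' ψ ψ' : ℝ → ℝ} (hφ : ∀ s, HasDerivAt φ (φ' s) s)
    (hψ : ∀ s, HasDerivAt ψ (ψ' s) s) (e : ℝ × ℝ) :
    dirDeriv e (fun p => φ p.1 + ψ p.2) = fun p => φ' p.1 * e.1 + ψ' p.2 * e.2 := by
  ext p
  exact DFunLike.congr_fun (((hφ p.1).comp_hasFDerivAt p (hasFDerivAt_fst (𝕜 := ℝ) (p := p))).add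
    ((hψ p.2).comp_hasFDerivAt p (hasFDerivAt_snd (𝕜 := ℝ) (p := p)))).fderiv e

theorem norm_le_norm_add_norm_of_prod {G : Type*} [NormedAddCommGroup G] [NormedSpace ℝ G]
    (A : ℝ × ℝ →L[ℝ] G) : ‖A‖ ≤ ‖A (1, 0)‖ + ‖A (0, 1)‖ := by
  refine A.opNorm_le_bound (by positivity) fun z => ?_
  have hz : A z = z.1 • A (1, 0) + z.2 • A (0, 1) := by
    rw [← map_smul, ← map_smul, ← map_add]
    simp
  calc ‖A z‖ ≤ ‖z.1‖ * ‖A (1, 0)‖ + ‖z.2‖ * ‖A (0, 1)‖ := by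
        rw [hz, ← norm_smul, ← norm_smul]
        exact norm_add_le _ _
    _ ≤ ‖z‖ * ‖A (1, 0)‖ + ‖z‖ * ‖A (0, 1)‖ := by
        gcongr
        exacts [norm_fst_le z, norm_snd_le z]
    _ = (‖A (1, 0)‖ + ‖A (0, 1)‖) * ‖z‖ := by ring

theorem norm_fderiv_le_abs_add_abs (g : ℝ × ℝ → ℝ) (p : ℝ × ℝ) :
    ‖fderiv ℝ g p‖ ≤ |∂₁ g p| + |∂₂ g p| :=
  norm_le_norm_add_norm_of_prod _

theorem norm_iteratedFDeriv_two_le {g : ℝ × ℝ → ℝ} (hg : ContDiff ℝ 2 g) (p : ℝ × ℝ) :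
    ‖iteratedFDeriv ℝ 2 g p‖ ≤ ‖fderiv ℝ (∂₁ g) p‖ + ‖fderiv ℝ (∂₂ g) p‖ := by
  have hswap : ∀ e, fderiv ℝ (dirDeriv e g) p = fderiv ℝ (fderiv ℝ g) p e := fun e => by
    ext : 1 <;> ext <;>
    · change dirDeriv _ (dirDeriv e g) p = _
      rw [dirDeriv_comm hg, dirDeriv_dirDeriv hg]
      rfl
  rw [← norm_iteratedFDeriv_fderiv, norm_iteratedFDeriv_one, hswap, hswap]
  exact norm_le_norm_add_norm_of_prod _

/-- The operator `Δ + c ∂_y` on functions on the plane. -/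
noncomputable def driftLaplacian (c : ℝ) (g : ℝ × ℝ → ℝ) (p : ℝ × ℝ) : ℝ :=
  ∂₁ (∂₁ g) p + ∂₂ (∂₂ g) p + c * ∂₂ g p

variable {c : ℝ} {g h : ℝ × ℝ → ℝ}

theorem differentiable_dirDeriv (hg : ContDiff ℝ 2 g) (e : ℝ × ℝ) :
    Differentiable ℝ (dirDeriv e g) :=
  (contDiff_dirDeriv (m := 1) hg (by norm_num) e).differentiable (by norm_num)

theorem driftLaplacian_sub (hg : ContDiff ℝ 2 g) (hh : ContDiff ℝ 2 h) (p : ℝ × ℝ) :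
    driftLaplacian c (fun q => g q - h q) p = driftLaplacian c g p - driftLaplacian c h p := by
  have hg' := hg.differentiable (by norm_num)
  have hh' := hh.differentiable (by norm_num)
  simp only [driftLaplacian, dirDeriv_sub hg' hh',
    dirDeriv_sub (differentiable_dirDeriv hg _) (differentiable_dirDeriv hh _)]
  ring

theorem driftLaplacian_neg (p : ℝ × ℝ) :
    driftLaplacian c (fun q => -g q) p = -driftLaplacian c g p := by
  simp only [driftLaplacian, dirDeriv_neg]
  ring

theorem driftLaplacian_sub_const (a : ℝ) (p : ℝ × ℝ) :
    driftLaplacian c (fun q => g q - a) p = driftLaplacian c g p := by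
  simp only [driftLaplacian, dirDeriv_sub_const]

theorem driftLaplacian_separated {φ φ' φ'' ψ ψ' ψ'' : ℝ → ℝ}
    (hφ : ∀ s, HasDerivAt φ (φ' s) s) (hφ' : ∀ s, HasDerivAt φ' (φ'' s) s)
    (hψ : ∀ s, HasDerivAt ψ (ψ' s) s) (hψ' : ∀ s, HasDerivAt ψ' (ψ'' s) s) (p : ℝ × ℝ) :
    driftLaplacian c (fun q => φ q.1 + ψ q.2) p = φ'' p.1 + ψ'' p.2 + c * ψ' p.2 := by
  have hsecond (a b : ℝ) : dirDeriv (a, b) (fun q : ℝ × ℝ => φ' q.1 * a + ψ' q.2 * b) =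
      fun q => φ'' q.1 * a * a + ψ'' q.2 * b * b :=
    dirDeriv_separated (fun s => (hφ' s).mul_const a) (fun s => (hψ' s).mul_const b) (a, b)
  simp only [driftLaplacian, dirDeriv_separated hφ hψ, hsecond]
  ring

theorem driftLaplacian_comp_const_add (a p : ℝ × ℝ) :
    driftLaplacian c (fun q => g (a + q)) p = driftLaplacian c g (a + p) := by
  simp only [driftLaplacian, dirDeriv_comp_const_add]

theorem dirDeriv_comp_neg_fst (a b : ℝ) (g : ℝ × ℝ → ℝ) :
    dirDeriv (a, b) (fun q => g (-q.1, q.2)) = fun q => dirDeriv (-a, b) g (-q.1, q.2) :=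
  dirDeriv_comp_equiv
    ((ContinuousLinearEquiv.neg ℝ).prodCongr (ContinuousLinearEquiv.refl ℝ ℝ)) (a, b) g

theorem dirDeriv_comp_neg_snd (a b : ℝ) (g : ℝ × ℝ → ℝ) :
    dirDeriv (a, b) (fun q => g (q.1, -q.2)) = fun q => dirDeriv (a, -b) g (q.1, -q.2) :=
  dirDeriv_comp_equiv
    ((ContinuousLinearEquiv.refl ℝ ℝ).prodCongr (ContinuousLinearEquiv.neg ℝ)) (a, b) g

theorem dirDeriv_comp_swap (a b : ℝ) (g : ℝ × ℝ → ℝ) :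
    dirDeriv (a, b) (fun q => g q.swap) = fun q => dirDeriv (b, a) g q.swap :=
  dirDeriv_comp_equiv (ContinuousLinearEquiv.prodComm ℝ ℝ ℝ) (a, b) g

theorem driftLaplacian_comp_neg_fst (p : ℝ × ℝ) :
    driftLaplacian c (fun q => g (-q.1, q.2)) p = driftLaplacian c g (-p.1, p.2) := by
  have hneg : (-1, 0) = -((1 : ℝ), (0 : ℝ)) := by simp
  simp only [driftLaplacian, dirDeriv_comp_neg_fst, neg_zero, hneg, dirDeriv_neg_left, dirDeriv_neg,
    neg_neg]

theorem driftLaplacian_comp_neg_snd (p : ℝ × ℝ) :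
    driftLaplacian (-c) (fun q => g (q.1, -q.2)) p = driftLaplacian c g (p.1, -p.2) := by
  have hneg : (0, -1) = -((0 : ℝ), (1 : ℝ)) := by simp
  simp only [driftLaplacian, dirDeriv_comp_neg_snd, neg_zero, hneg, dirDeriv_neg_left, dirDeriv_neg,
    neg_neg, neg_mul_neg]

theorem driftLaplacian_comp_swap (p : ℝ × ℝ) :
    driftLaplacian 0 (fun q => g q.swap) p = driftLaplacian 0 g p.swap := by
  simp only [driftLaplacian, dirDeriv_comp_swap]
  ring

theorem driftLaplacian_dirDeriv (hg : ContDiff ℝ 3 g) (e p : ℝ × ℝ) :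
    driftLaplacian c (dirDeriv e g) p = dirDeriv e (driftLaplacian c g) p := by
  have hg2 : ContDiff ℝ 2 g := hg.of_le (by norm_num)
  have hd (a : ℝ × ℝ) : ContDiff ℝ 2 (dirDeriv a g) := contDiff_dirDeriv hg (by norm_num) a
  have hdd (a : ℝ × ℝ) : Differentiable ℝ (dirDeriv a (dirDeriv a g)) :=
    differentiable_dirDeriv (hd a) a
  have hcomm (a : ℝ × ℝ) :
      dirDeriv a (dirDeriv a (dirDeriv e g)) = dirDeriv e (dirDeriv a (dirDeriv a g)) := by
    rw [dirDeriv_comm hg2 a e, dirDeriv_comm (hd a)]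
  change _ = dirDeriv e (fun q => ∂₁ (∂₁ g) q + ∂₂ (∂₂ g) q + c * ∂₂ g q) p
  rw [dirDeriv_add ((hdd _).fun_add (hdd _)) ((differentiable_dirDeriv hg2 _).const_mul c),
    dirDeriv_add (hdd _) (hdd _), dirDeriv_const_mul]
  simp only [driftLaplacian, hcomm]
  rw [dirDeriv_comm hg2 _ e]

theorem dirDeriv_exp_mul (k a b : ℝ) (hg : Differentiable ℝ g) :
    dirDeriv (a, b) (fun q => exp (k * q.2) * g q) =
      fun q => exp (k * q.2) * (dirDeriv (a, b) g q + k * b * g q) := by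
  have hexp : Differentiable ℝ fun q : ℝ × ℝ => exp (k * q.2) := by fun_prop
  ext q
  have hderiv : dirDeriv (a, b) (fun q : ℝ × ℝ => exp (k * q.2)) q = exp (k * q.2) * (k * b) :=
    DFunLike.congr_fun ((hasFDerivAt_snd (𝕜 := ℝ) (p := q)).const_mul k).exp.fderiv (a, b)
  simp only [dirDeriv_mul hexp hg, hderiv]
  ring

theorem driftLaplacian_exp_mul (hg : ContDiff ℝ 2 g) (p : ℝ × ℝ) :
    driftLaplacian 0 (fun q => exp (c / 2 * q.2) * g q) p =
      exp (c / 2 * p.2) * (driftLaplacian c g p + c ^ 2 / 4 * g p) := by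
  have hdiff : Differentiable ℝ g := hg.differentiable (by norm_num)
  have hd (e : ℝ × ℝ) := differentiable_dirDeriv hg e
  simp only [driftLaplacian, dirDeriv_exp_mul _ _ _ hdiff,
    dirDeriv_exp_mul _ _ _ ((hd _).fun_add (hdiff.const_mul _)),
    dirDeriv_add (hd _) (hdiff.const_mul _), dirDeriv_const_mul]
  ring

end Plane

section MaximumPrinciple

theorem deriv_deriv_nonpos_of_isLocalMax {f : ℝ → ℝ} {a : ℝ} (hf : ContinuousAt f a)
    (hmax : IsLocalMax f a) : deriv (deriv f) a ≤ 0 := by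
  by_contra! hpos
  have hmin : IsLocalMin f a := isLocalMin_of_deriv_deriv_pos hpos hmax.deriv_eq_zero hf
  have hconst : f =ᶠ[𝓝 a] fun _ => f a := by
    filter_upwards [hmax, hmin] with t h₁ h₂ using le_antisymm h₁ h₂
  have hzero : deriv (deriv f) a = 0 := by simpa using hconst.deriv.deriv_eq
  exact hpos.ne' hzero

theorem dirDeriv_dirDeriv_nonpos_of_isLocalMax {E : Type*} [NormedAddCommGroup E]
    [NormedSpace ℝ E] {g : E → ℝ} (hg : ContDiff ℝ 2 g) {p : E} (hmax : IsLocalMax g p) (e : E) :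
    dirDeriv e (dirDeriv e g) p ≤ 0 := by
  have hline := hasDerivAt_comp_add_smul (hg.differentiable (by norm_num)) p e
  have hline' := hasDerivAt_comp_add_smul
    ((contDiff_dirDeriv (m := 1) hg (by norm_num) e).differentiable (by norm_num)) p e
  have hcont : ContinuousAt (fun t : ℝ => p + t • e) 0 := by fun_prop
  have hmax' : IsLocalMax (fun t : ℝ => g (p + t • e)) 0 := by
    have htend : Tendsto (fun t : ℝ => p + t • e) (𝓝 0) (𝓝 p) := by simpa using hcont.tendsto
    simpa [IsLocalMax, IsMaxFilter] using htend.eventually hmax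
  have h := deriv_deriv_nonpos_of_isLocalMax (hline 0).continuousAt hmax'
  rw [funext fun t => (hline t).deriv, (hline' 0).deriv] at h
  simpa using h

variable {c : ℝ} {g : ℝ × ℝ → ℝ}

theorem nonpos_of_driftLaplacian_pos (hg : ContDiff ℝ 2 g) {K : Set (ℝ × ℝ)} (hK : IsCompact K)
    (hfrontier : ∀ p ∈ frontier K, g p ≤ 0)
    (hinterior : ∀ p ∈ interior K, 0 < g p → 0 < driftLaplacian c g p) :
    ∀ p ∈ K, g p ≤ 0 := by
  intro p hp
  obtain ⟨q, hq, hmax⟩ := hK.exists_isMaxOn ⟨p, hp⟩ hg.continuous.continuousOn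
  refine (hmax hp).trans ?_
  by_contra! hpos
  have hqi : q ∈ interior K := by
    by_contra hqi
    exact (hfrontier q ⟨subset_closure hq, hqi⟩).not_gt hpos
  have hloc : IsLocalMax g q := hmax.isLocalMax (mem_interior_iff_mem_nhds.1 hqi)
  have hgrad : ∂₂ g q = 0 := by rw [dirDeriv, hloc.fderiv_eq_zero]; rfl
  have hpos' := hinterior q hqi hpos
  rw [driftLaplacian, hgrad] at hpos'
  linarith [dirDeriv_dirDeriv_nonpos_of_isLocalMax hg hloc (1, 0),
    dirDeriv_dirDeriv_nonpos_of_isLocalMax hg hloc (0, 1)]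

end MaximumPrinciple

section GradientEstimate

variable {c M N : ℝ} {g : ℝ × ℝ → ℝ}

/-- The quadratic barrier for the odd part of a function `g` on the unit square with `|g| ≤ M` and
`|Δg| ≤ N`. -/
noncomputable def poissonBarrier (M N : ℝ) (p : ℝ × ℝ) : ℝ :=
  ((4 * M + N) * p.1 - (2 * M + N) * p.1 ^ 2) + 2 * M * p.2 ^ 2

theorem contDiff_poissonBarrier : ContDiff ℝ 2 (poissonBarrier M N) := by
  unfold poissonBarrier
  fun_prop

theorem hasDerivAt_const_mul_sq (a x : ℝ) : HasDerivAt (fun t => a * t ^ 2) (2 * a * x) x := by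
  simpa [mul_left_comm, mul_assoc] using (hasDerivAt_pow 2 x).const_mul a

theorem hasDerivAt_linear_sub_sq (a b x : ℝ) :
    HasDerivAt (fun t => a * t - b * t ^ 2) (a - 2 * b * x) x := by
  simpa using ((hasDerivAt_id' x).const_mul a).fun_sub (hasDerivAt_const_mul_sq b x)

theorem dirDeriv_poissonBarrier_zero : ∂₁ (poissonBarrier M N) 0 = 4 * M + N := by
  unfold poissonBarrier
  rw [dirDeriv_separated (hasDerivAt_linear_sub_sq _ _) (hasDerivAt_const_mul_sq _)]
  simp

theorem driftLaplacian_poissonBarrier (p : ℝ × ℝ) :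
    driftLaplacian 0 (poissonBarrier M N) p = -(2 * N) := by
  have hlin (a x : ℝ) : HasDerivAt (fun t => a * t) a x := by
    simpa using (hasDerivAt_id' x).const_mul a
  unfold poissonBarrier
  rw [driftLaplacian_separated (hasDerivAt_linear_sub_sq _ _) (fun x => (hlin _ x).const_sub _)
    (hasDerivAt_const_mul_sq _) (hlin _)]
  ring

theorem sub_reflection_le_poissonBarrier (hg : ContDiff ℝ 2 g)
    (hM : ∀ p ∈ closedBall (0 : ℝ × ℝ) 1, |g p| ≤ M)
    (hN : ∀ p ∈ closedBall (0 : ℝ × ℝ) 1, |driftLaplacian 0 g p| < N) :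
    ∀ p ∈ Set.Icc (0 : ℝ) 1 ×ˢ Set.Icc (-1 : ℝ) 1,
      g p - g (-p.1, p.2) - poissonBarrier M N p ≤ 0 := by
  have hM0 : 0 ≤ M := (abs_nonneg _).trans (hM 0 (by simp))
  have hN0 : 0 < N := (abs_nonneg _).trans_lt (hN 0 (by simp))
  have hrefl : ContDiff ℝ 2 fun p : ℝ × ℝ => g (-p.1, p.2) := by fun_prop
  have hmem {x y : ℝ} (hx : x ∈ Set.Icc 0 1) (hy : y ∈ Set.Icc (-1) 1) :
      (x, y) ∈ closedBall (0 : ℝ × ℝ) 1 ∧ (-x, y) ∈ closedBall (0 : ℝ × ℝ) 1 := by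
    have hx' : |x| ≤ 1 := abs_le.2 ⟨by linarith [hx.1], hx.2⟩
    simp [Prod.norm_def, hx', abs_le.2 hy]
  refine nonpos_of_driftLaplacian_pos (c := 0) ((hg.sub hrefl).sub contDiff_poissonBarrier)
    (isCompact_Icc.prod isCompact_Icc) ?_ ?_
  · rintro ⟨x, y⟩ hp
    have hclosed := (isClosed_Icc.prod isClosed_Icc).frontier_subset hp
    rw [frontier_prod_eq, frontier_Icc zero_le_one, frontier_Icc (by norm_num)] at hp
    have h₁ := abs_le.1 (hM _ (hmem hclosed.1 hclosed.2).1)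
    have h₂ := abs_le.1 (hM _ (hmem hclosed.1 hclosed.2).2)
    have hx : 0 ≤ N * (x * (1 - x)) + 2 * M * (x * (2 - x)) := by
      have hx₁ := sub_nonneg.2 hclosed.1.2
      have hx₀ := hclosed.1.1
      have hx₂ : 0 ≤ 2 - x := by linarith
      positivity
    have hy : 0 ≤ M * y ^ 2 := by positivity
    unfold poissonBarrier
    rcases hp with ⟨-, rfl | rfl⟩ | ⟨rfl | rfl, -⟩ <;> norm_num at * <;> nlinarith
  · rintro ⟨x, y⟩ hp -
    have hp' := interior_subset hp
    have h₁ := abs_lt.1 (hN _ (hmem hp'.1 hp'.2).1)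
    have h₂ := abs_lt.1 (hN _ (hmem hp'.1 hp'.2).2)
    rw [driftLaplacian_sub (hg.sub hrefl) contDiff_poissonBarrier, driftLaplacian_sub hg hrefl,
      driftLaplacian_comp_neg_fst, driftLaplacian_poissonBarrier]
    linarith

theorem dirDeriv_fst_zero_le (hg : ContDiff ℝ 2 g)
    (hM : ∀ p ∈ closedBall (0 : ℝ × ℝ) 1, |g p| ≤ M)
    (hN : ∀ p ∈ closedBall (0 : ℝ × ℝ) 1, |driftLaplacian 0 g p| ≤ N) :
    ∂₁ g 0 ≤ 2 * M + N / 2 := by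
  refine le_of_forall_pos_le_add fun ε hε => ?_
  have hzero : ((0 : ℝ), (0 : ℝ)) = 0 := rfl
  have hodd := sub_reflection_le_poissonBarrier (N := N + ε) hg hM fun p hp =>
    (hN p hp).trans_lt (by linarith)
  have hrefl : ContDiff ℝ 2 fun p : ℝ × ℝ => g (-p.1, p.2) := by fun_prop
  set w : ℝ × ℝ → ℝ := fun p => g p - g (-p.1, p.2) - poissonBarrier M (N + ε) p
  have hw : ContDiff ℝ 2 w := (hg.sub hrefl).sub contDiff_poissonBarrier
  have hmax : IsLocalMaxOn w (Set.Icc (0 : ℝ) 1 ×ˢ Set.Icc (-1 : ℝ) 1) 0 := by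
    refine IsMaxOn.localize fun p hp => (hodd p hp).trans_eq ?_
    simp [w, poissonBarrier, hzero]
  have hnonpos : ∂₁ w 0 ≤ 0 := by
    refine hmax.hasFDerivWithinAt_nonpos
      (hw.differentiable (by norm_num) 0).hasFDerivAt.hasFDerivWithinAt
      (mem_posTangentConeAt_of_segment_subset ?_)
    exact ((convex_Icc _ _).prod (convex_Icc _ _)).segment_subset
      ⟨by simp, by simp⟩ ⟨by simp, by simp⟩
  have hderiv : ∂₁ w 0 = 2 * ∂₁ g 0 - (4 * M + (N + ε)) := by
    have hneg : (-1, 0) = -((1 : ℝ), (0 : ℝ)) := by simp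
    have hd {h : ℝ × ℝ → ℝ} (hh : ContDiff ℝ 2 h) : Differentiable ℝ h :=
      hh.differentiable (by norm_num)
    rw [dirDeriv_sub (hd (hg.sub hrefl)) (hd contDiff_poissonBarrier),
      dirDeriv_sub (hd hg) (hd hrefl), dirDeriv_comp_neg_fst, hneg, dirDeriv_neg_left]
    simp only [dirDeriv_poissonBarrier_zero, Prod.fst_zero, Prod.snd_zero, neg_zero, hzero]
    ring
  linarith

theorem abs_dirDeriv_fst_zero_le (hg : ContDiff ℝ 2 g)
    (hM : ∀ p ∈ closedBall (0 : ℝ × ℝ) 1, |g p| ≤ M)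
    (hN : ∀ p ∈ closedBall (0 : ℝ × ℝ) 1, |driftLaplacian 0 g p| ≤ N) :
    |∂₁ g 0| ≤ 2 * M + N / 2 := by
  refine abs_le'.2 ⟨dirDeriv_fst_zero_le hg hM hN, ?_⟩
  have hneg := dirDeriv_fst_zero_le hg.neg (by simpa using hM)
    (by simpa [driftLaplacian_neg] using hN)
  simpa [dirDeriv_neg] using hneg

theorem abs_dirDeriv_snd_zero_le (hg : ContDiff ℝ 2 g)
    (hM : ∀ p ∈ closedBall (0 : ℝ × ℝ) 1, |g p| ≤ M)
    (hN : ∀ p ∈ closedBall (0 : ℝ × ℝ) 1, |driftLaplacian 0 g p| ≤ N) :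
    |∂₂ g 0| ≤ 2 * M + N / 2 := by
  have hmem {p : ℝ × ℝ} (hp : p ∈ closedBall (0 : ℝ × ℝ) 1) :
      p.swap ∈ closedBall (0 : ℝ × ℝ) 1 := by
    simpa [Prod.norm_def, and_comm] using hp
  have hswap : ContDiff ℝ 2 fun p : ℝ × ℝ => g p.swap := hg.comp (contDiff_snd.prodMk contDiff_fst)
  have h := abs_dirDeriv_fst_zero_le hswap (fun p hp => hM _ (hmem hp)) fun p hp => by
    rw [driftLaplacian_comp_swap]
    exact hN _ (hmem hp)
  rwa [dirDeriv_comp_swap] at h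

theorem abs_exp_mul_le (c : ℝ) {p : ℝ × ℝ} (hp : p ∈ closedBall (0 : ℝ × ℝ) 1) {a A : ℝ}
    (ha : |a| ≤ A) : |exp (c / 2 * p.2) * a| ≤ exp (|c| / 2) * A := by
  have hp₂ : |p.2| ≤ 1 := (norm_snd_le p).trans (mem_closedBall_zero_iff.1 hp)
  have hexp : exp (c / 2 * p.2) ≤ exp (|c| / 2) := by
    refine exp_le_exp.2 ((le_abs_self _).trans ?_)
    rw [abs_mul, abs_div, abs_two]
    exact mul_le_of_le_one_right (by positivity) hp₂
  rw [abs_mul, abs_exp]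
  exact mul_le_mul hexp ha (abs_nonneg _) (exp_pos _).le

theorem norm_fderiv_zero_le (hg : ContDiff ℝ 2 g)
    (hM : ∀ p ∈ closedBall (0 : ℝ × ℝ) 1, |g p| ≤ M)
    (hN : ∀ p ∈ closedBall (0 : ℝ × ℝ) 1, |driftLaplacian c g p| ≤ N) :
    ‖fderiv ℝ g 0‖ ≤ (exp (|c| / 2) * (4 + c ^ 2) + |c|) * (M + N) := by
  have hM0 : 0 ≤ M := (abs_nonneg _).trans (hM 0 (by simp))
  have hN0 : 0 ≤ N := (abs_nonneg _).trans (hN 0 (by simp))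
  set E := exp (|c| / 2)
  -- Multiplication by `exp (c y / 2)` removes the drift.
  set h : ℝ × ℝ → ℝ := fun q => exp (c / 2 * q.2) * g q
  have hh : ContDiff ℝ 2 h := by fun_prop
  have hhM : ∀ p ∈ closedBall (0 : ℝ × ℝ) 1, |h p| ≤ E * M := fun p hp =>
    abs_exp_mul_le c hp (hM p hp)
  have hhN : ∀ p ∈ closedBall (0 : ℝ × ℝ) 1,
      |driftLaplacian 0 h p| ≤ E * (N + c ^ 2 / 4 * M) := fun p hp => by
    rw [driftLaplacian_exp_mul hg]
    refine abs_exp_mul_le c hp ((abs_add_le _ _).trans ?_)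
    rw [abs_mul, abs_of_nonneg (by positivity : 0 ≤ c ^ 2 / 4)]
    gcongr
    exacts [hN p hp, hM p hp]
  have hdiff : Differentiable ℝ g := hg.differentiable (by norm_num)
  have h₁ := abs_dirDeriv_fst_zero_le hh hhM hhN
  have h₂ := abs_dirDeriv_snd_zero_le hh hhM hhN
  simp only [h, dirDeriv_exp_mul _ _ _ hdiff, Prod.snd_zero, mul_zero, zero_mul, mul_one, exp_zero,
    one_mul, add_zero] at h₁ h₂
  have hcg : |c / 2 * g 0| ≤ |c| / 2 * M := by
    rw [abs_mul, abs_div, abs_two]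
    gcongr
    exact hM 0 (by simp)
  have h₂' : |∂₂ g 0| ≤ 2 * (E * M) + E * (N + c ^ 2 / 4 * M) / 2 + |c| / 2 * M := by
    have := abs_sub (∂₂ g 0 + c / 2 * g 0) (c / 2 * g 0)
    rw [add_sub_cancel_right] at this
    linarith
  have hpos : 0 ≤ E * c ^ 2 * M * (3 / 4) + E * (3 + c ^ 2) * N + |c| * (M / 2 + N) := by positivity
  linarith [norm_fderiv_le_abs_add_abs g 0]

theorem exists_norm_fderiv_le (c : ℝ) : ∃ K > 0, ∀ {g : ℝ × ℝ → ℝ} {p : ℝ × ℝ} {M N : ℝ},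
    ContDiff ℝ 2 g → (∀ q ∈ closedBall p 1, |g q| ≤ M) →
    (∀ q ∈ closedBall p 1, |driftLaplacian c g q| ≤ N) → ‖fderiv ℝ g p‖ ≤ K * (M + N) := by
  refine ⟨exp (|c| / 2) * (4 + c ^ 2) + |c|, by positivity, fun {g p M N} hg hM hN => ?_⟩
  have hmem {q : ℝ × ℝ} (hq : q ∈ closedBall (0 : ℝ × ℝ) 1) : p + q ∈ closedBall p 1 := by
    simpa [mem_closedBall_iff_norm] using hq
  have h := norm_fderiv_zero_le (g := fun q => g (p + q)) (by fun_prop) (fun q hq => hM _ (hmem hq))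
    fun q hq => by
      rw [driftLaplacian_comp_const_add]
      exact hN _ (hmem hq)
  simpa [fderiv_comp_add_left] using h

end GradientEstimate

/-- `U` is a bounded `C³` solution of `ΔU + c ∂_y U = f(U)` on the plane. -/
structure BoundedSolution (f : ℝ → ℝ) (c : ℝ) (U : ℝ × ℝ → ℝ) : Prop where
  contDiff : ContDiff ℝ 3 U
  contDiff_nonlinearity : ContDiff ℝ 1 f
  pde : ∀ p, driftLaplacian c U p = f (U p)
  bounded : ∃ b, ∀ p, |U p| ≤ b

namespace BoundedSolution

variable {f : ℝ → ℝ} {c a : ℝ} {U : ℝ × ℝ → ℝ}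

theorem contDiff_two (hU : BoundedSolution f c U) : ContDiff ℝ 2 U :=
  hU.contDiff.of_le (by norm_num)

theorem differentiable (hU : BoundedSolution f c U) : Differentiable ℝ U :=
  hU.contDiff.differentiable (by norm_num)

theorem contDiff_dirDeriv (hU : BoundedSolution f c U) (e : ℝ × ℝ) :
    ContDiff ℝ 2 (dirDeriv e U) :=
  _root_.contDiff_dirDeriv hU.contDiff (by norm_num) e

theorem exists_abs_comp_le (hU : BoundedSolution f c U) {φ : ℝ → ℝ} (hφ : Continuous φ) :
    ∃ L > 0, ∀ p, |φ (U p)| ≤ L := by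
  obtain ⟨b, hb⟩ := hU.bounded
  obtain ⟨L, hL⟩ := (isCompact_Icc (a := -b) (b := b)).exists_bound_of_continuousOn hφ.continuousOn
  exact ⟨max L 1, by positivity, fun p => (hL _ (abs_le.1 (hb p))).trans (le_max_left _ _)⟩

theorem exists_abs_nonlinearity_le (hU : BoundedSolution f c U) (ha : f a = 0) :
    ∃ L > 0, ∀ p, |f (U p)| ≤ L * |U p - a| := by
  obtain ⟨b, hb⟩ := hU.bounded
  set r := max b |a|
  obtain ⟨L, hL⟩ := hU.contDiff_nonlinearity.contDiffOn.exists_lipschitzOnWith (by norm_num)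
    (convex_Icc (-r) r) isCompact_Icc
  refine ⟨L + 1, by positivity, fun p => ?_⟩
  have h := hL.dist_le_mul (U p) (abs_le.1 ((hb p).trans (le_max_left _ _))) a
    (abs_le.1 (le_max_right _ _))
  rw [ha, Real.dist_eq, Real.dist_eq, sub_zero] at h
  exact h.trans (by gcongr; simp)

theorem driftLaplacian_dirDeriv (hU : BoundedSolution f c U) (e p : ℝ × ℝ) :
    driftLaplacian c (dirDeriv e U) p = deriv f (U p) * dirDeriv e U p := by
  have hf (s : ℝ) : HasDerivAt f (deriv f s) s :=
    (hU.contDiff_nonlinearity.differentiable (by norm_num) s).hasDerivAt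
  rw [_root_.driftLaplacian_dirDeriv hU.contDiff, funext hU.pde, dirDeriv_comp hf hU.differentiable]

theorem exists_norm_fderiv_le_mul (hU : BoundedSolution f c U) (ha : f a = 0) :
    ∃ K > 0, ∀ p M, (∀ q ∈ closedBall p 1, |U q - a| ≤ M) → ‖fderiv ℝ U p‖ ≤ K * M := by
  obtain ⟨K, hK, hgrad⟩ := exists_norm_fderiv_le c
  obtain ⟨L, hL, hfL⟩ := hU.exists_abs_nonlinearity_le ha
  refine ⟨K * (1 + L), by positivity, fun p M hM => ?_⟩
  have h := hgrad (N := L * M) (hU.contDiff_two.sub contDiff_const) hM fun q hq => by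
    rw [driftLaplacian_sub_const, hU.pde]
    exact (hfL q).trans (by gcongr; exact hM q hq)
  rw [fderiv_sub_const] at h
  linarith

theorem exists_norm_fderiv_dirDeriv_le_mul (hU : BoundedSolution f c U) :
    ∃ K > 0, ∀ e p M, (∀ q ∈ closedBall p 1, |dirDeriv e U q| ≤ M) →
      ‖fderiv ℝ (dirDeriv e U) p‖ ≤ K * M := by
  obtain ⟨K, hK, hgrad⟩ := exists_norm_fderiv_le c
  obtain ⟨L, hL, hfL⟩ := hU.exists_abs_comp_le
    (hU.contDiff_nonlinearity.continuous_deriv le_rfl)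
  refine ⟨K * (1 + L), by positivity, fun e p M hM => ?_⟩
  have h := hgrad (N := L * M) (hU.contDiff_dirDeriv e) hM fun q hq => by
    rw [hU.driftLaplacian_dirDeriv, abs_mul]
    exact mul_le_mul (hfL q) (hM q hq) (abs_nonneg _) hL.le
  linarith

theorem exists_norm_fderiv_le (hU : BoundedSolution f c U) : ∃ B > 0, ∀ p, ‖fderiv ℝ U p‖ ≤ B := by
  obtain ⟨K, hK, hgrad⟩ := _root_.exists_norm_fderiv_le c
  obtain ⟨b, hb₀, hb⟩ := hU.exists_abs_comp_le continuous_id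
  obtain ⟨L, hL, hfL⟩ := hU.exists_abs_comp_le hU.contDiff_nonlinearity.continuous
  exact ⟨K * (b + L), by positivity, fun p => hgrad hU.contDiff_two (fun q _ => hb q)
    fun q _ => by rw [hU.pde]; exact hfL q⟩

theorem exists_norm_fderiv_dirDeriv_le (hU : BoundedSolution f c U) :
    ∃ B > 0, ∀ e, ‖e‖ ≤ 1 → ∀ p, ‖fderiv ℝ (dirDeriv e U) p‖ ≤ B := by
  obtain ⟨B, hB, hgrad⟩ := hU.exists_norm_fderiv_le
  obtain ⟨K, hK, hsecond⟩ := hU.exists_norm_fderiv_dirDeriv_le_mul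
  exact ⟨K * B, by positivity, fun e he p =>
    hsecond e p B fun q _ => (abs_dirDeriv_le he U q).trans (hgrad q)⟩

end BoundedSolution

section Barrier

theorem exists_pos_sq_add_mul_le {κ : ℝ} (hκ : 0 < κ) (c : ℝ) : ∃ ν > 0, ν ^ 2 + |c| * ν ≤ κ := by
  refine ⟨min 1 (κ / (1 + |c|)), by positivity, ?_⟩
  set ν := min 1 (κ / (1 + |c|))
  have hν : 0 < ν := by positivity
  calc ν ^ 2 + |c| * ν ≤ (1 + |c|) * ν := by nlinarith [min_le_left 1 (κ / (1 + |c|))]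
    _ ≤ (1 + |c|) * (κ / (1 + |c|)) := by
      gcongr
      exact min_le_right _ _
    _ = κ := by field_simp

theorem exists_mul_sq_le_of_hasDerivAt_pos {f : ℝ → ℝ} {a m : ℝ} (hf : HasDerivAt f m a)
    (ha : f a = 0) (hm : 0 < m) :
    ∃ κ > 0, ∃ δ > 0, ∀ s, |s - a| ≤ δ → κ * (s - a) ^ 2 ≤ f s * (s - a) := by
  have hlin := (hasDerivAt_iff_isLittleO.1 hf).bound (half_pos hm)
  obtain ⟨δ, hδ, hball⟩ := Metric.nhds_basis_closedBall.eventually_iff.1 hlin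
  refine ⟨m / 2, half_pos hm, δ, hδ, fun s hs => ?_⟩
  have h : |f s - (s - a) * m| ≤ m / 2 * |s - a| := by
    simpa [ha] using hball (mem_closedBall_iff_norm.2 hs)
  have hprod : |(f s - (s - a) * m) * (s - a)| ≤ m / 2 * (s - a) ^ 2 := by
    rw [abs_mul, ← sq_abs (s - a), sq, ← mul_assoc]
    gcongr
  linarith [neg_le_of_abs_le hprod]

/-- The barrier for solutions of `Δg + c ∂_y g ≥ κ g` on squares centered at `a`. -/
noncomputable def coshBarrier (A ν : ℝ) (a p : ℝ × ℝ) : ℝ :=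
  A * cosh (ν * (p.1 - a.1)) + A * cosh (ν * (p.2 - a.2))

variable {A ν κ δ ρ c : ℝ} {a p : ℝ × ℝ} {g : ℝ × ℝ → ℝ}

theorem contDiff_coshBarrier : ContDiff ℝ 2 (coshBarrier A ν a) := by
  unfold coshBarrier
  fun_prop

theorem driftLaplacian_coshBarrier_le (hA : 0 ≤ A) (hν : 0 ≤ ν) (hκ : ν ^ 2 + |c| * ν ≤ κ) :
    driftLaplacian c (coshBarrier A ν a) p ≤ κ * coshBarrier A ν a p := by
  have hlin (b s : ℝ) : HasDerivAt (fun t => ν * (t - b)) ν s := by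
    simpa using ((hasDerivAt_id' s).sub_const b).const_mul ν
  have hcosh (b s : ℝ) := ((hlin b s).cosh.const_mul A)
  have hsinh (b s : ℝ) := (((hlin b s).sinh.mul_const ν).const_mul A)
  unfold coshBarrier
  rw [driftLaplacian_separated (hcosh _) (hsinh _) (hcosh _) (hsinh _)]
  set C₁ := cosh (ν * (p.1 - a.1))
  set C₂ := cosh (ν * (p.2 - a.2))
  have hsinh_le : c * sinh (ν * (p.2 - a.2)) ≤ |c| * C₂ := by
    refine (le_abs_self _).trans ?_
    rw [abs_mul, abs_sinh]
    gcongr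
    exact (sinh_lt_cosh _).le.trans_eq (cosh_abs _)
  have hsum : 0 ≤ C₁ + C₂ := (add_pos (cosh_pos _) (cosh_pos _)).le
  have hdrift : c * sinh (ν * (p.2 - a.2)) ≤ |c| * (C₁ + C₂) := hsinh_le.trans
    (mul_le_mul_of_nonneg_left (le_add_of_nonneg_left (cosh_pos _).le) (abs_nonneg c))
  calc _ = A * (ν ^ 2 * (C₁ + C₂) + ν * (c * sinh (ν * (p.2 - a.2)))) := by ring
    _ ≤ A * (ν ^ 2 * (C₁ + C₂) + ν * (|c| * (C₁ + C₂))) := by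
        gcongr
    _ = A * ((ν ^ 2 + |c| * ν) * (C₁ + C₂)) := by ring
    _ ≤ A * (κ * (C₁ + C₂)) :=
        mul_le_mul_of_nonneg_left (mul_le_mul_of_nonneg_right hκ hsum) hA
    _ = κ * (A * C₁ + A * C₂) := by ring

theorem le_coshBarrier_of_mem_sphere (hA : 0 ≤ A) (hp : p ∈ sphere a ρ) :
    A * cosh (ν * ρ) ≤ coshBarrier A ν a p := by
  have hcosh (t : ℝ) : 0 ≤ A * cosh t := mul_nonneg hA (cosh_pos t).le
  have habs (t : ℝ) : cosh (ν * |t|) = cosh (ν * t) := by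
    rw [← cosh_abs, abs_mul, abs_abs, ← abs_mul, cosh_abs]
  rw [mem_sphere, Prod.dist_eq, Real.dist_eq, Real.dist_eq] at hp
  unfold coshBarrier
  rw [← habs (p.1 - a.1), ← habs (p.2 - a.2)]
  rcases max_choice |p.1 - a.1| |p.2 - a.2| with h | h <;> rw [← hp, h]
  · linarith [hcosh (ν * |p.2 - a.2|)]
  · linarith [hcosh (ν * |p.1 - a.1|)]

theorem le_exp_of_mul_le_driftLaplacian (hg : ContDiff ℝ 2 g) (hν : 0 < ν)
    (hκ : ν ^ 2 + |c| * ν ≤ κ) (hδ : 0 ≤ δ) (hρ : 0 ≤ ρ) (hle : ∀ q ∈ closedBall a ρ, g q ≤ δ)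
    (hsub : ∀ q ∈ closedBall a ρ, 0 < g q → κ * g q ≤ driftLaplacian c g q) :
    g a ≤ 4 * δ * exp (-(ν * ρ)) := by
  have hcosh : exp (ν * ρ) / 2 ≤ cosh (ν * ρ) := by
    rw [cosh_eq]
    linarith [exp_pos (-(ν * ρ))]
  set A := δ / cosh (ν * ρ) with hA_def
  have hA : 0 ≤ A := div_nonneg hδ (cosh_pos _).le
  have hB (q : ℝ × ℝ) : 0 ≤ coshBarrier A ν a q :=
    add_nonneg (mul_nonneg hA (cosh_pos _).le) (mul_nonneg hA (cosh_pos _).le)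
  have hκ₀ : 0 < κ := lt_of_lt_of_le (by positivity) hκ
  have hcompare : ∀ q ∈ closedBall a ρ, g q - coshBarrier A ν a q ≤ 0 := by
    refine nonpos_of_driftLaplacian_pos (c := c) (hg.sub contDiff_coshBarrier)
      (isCompact_closedBall a ρ) (fun q hq => ?_) fun q hq hpos => ?_
    · have hsphere := frontier_closedBall_subset_sphere hq
      have h := le_coshBarrier_of_mem_sphere (ν := ν) hA hsphere
      rw [div_mul_cancel₀ _ (cosh_pos _).ne'] at h
      linarith [hle q (sphere_subset_closedBall hsphere)]
    · rw [driftLaplacian_sub hg contDiff_coshBarrier]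
      have h₁ := hsub q (interior_subset hq) (by linarith [hB q])
      have h₂ := driftLaplacian_coshBarrier_le (p := q) (a := a) hA hν.le hκ
      nlinarith
  have ha := hcompare a (mem_closedBall_self hρ)
  calc g a ≤ 2 * A := by
        simp only [coshBarrier, sub_self, mul_zero, cosh_zero] at ha
        linarith
    _ ≤ 2 * (δ / (exp (ν * ρ) / 2)) := by
        rw [hA_def]
        gcongr
    _ = 4 * δ * exp (-(ν * ρ)) := by
        rw [exp_neg]
        field_simp
        ring

end Barrier

theorem BoundedSolution.abs_sub_le_exp {f : ℝ → ℝ} {c a κ δ ν ρ : ℝ} {U : ℝ × ℝ → ℝ}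
    (hU : BoundedSolution f c U)
    (hf : ∀ s, |s - a| ≤ δ → κ * (s - a) ^ 2 ≤ f s * (s - a)) (hν : 0 < ν)
    (hκ : ν ^ 2 + |c| * ν ≤ κ) (hρ : 0 ≤ ρ) {p : ℝ × ℝ}
    (hnear : ∀ q ∈ closedBall p ρ, |U q - a| ≤ δ) : |U p - a| ≤ 4 * δ * exp (-(ν * ρ)) := by
  have hδ : 0 ≤ δ := (abs_nonneg _).trans (hnear p (mem_closedBall_self hρ))
  have hw : ContDiff ℝ 2 fun q => U q - a := hU.contDiff_two.sub contDiff_const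
  have hLw (q : ℝ × ℝ) : driftLaplacian c (fun q => U q - a) q = f (U q) := by
    rw [driftLaplacian_sub_const, hU.pde]
  refine abs_le'.2 ⟨le_exp_of_mul_le_driftLaplacian hw hν hκ hδ hρ
    (fun q hq => (abs_le'.1 (hnear q hq)).1) fun q hq hpos => ?_,
    le_exp_of_mul_le_driftLaplacian hw.neg hν hκ hδ hρ
    (fun q hq => (abs_le'.1 (hnear q hq)).2) fun q hq hpos => ?_⟩
  · rw [hLw]
    exact le_of_mul_le_mul_right (by linarith [hf _ (hnear q hq)]) hpos
  · rw [driftLaplacian_neg, hLw]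
    exact le_of_mul_le_mul_right (by linarith [hf _ (hnear q hq)]) hpos

/-- A nonlinearity with stable zeros at `±1` and a sign change at `0` only. -/
structure Bistable (f : ℝ → ℝ) : Prop where
  map_neg_one : f (-1) = 0
  map_one : f 1 = 0
  deriv_neg_one_pos : 0 < deriv f (-1)
  deriv_one_pos : 0 < deriv f 1
  pos : ∀ s ∈ Set.Ioo (-1 : ℝ) 0, 0 < f s
  neg : ∀ s ∈ Set.Ioo (0 : ℝ) 1, f s < 0

theorem Bistable.reflect {f : ℝ → ℝ} (hf : Bistable f) : Bistable fun s => -f (-s) where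
  map_neg_one := by simp [hf.map_one]
  map_one := by simp [hf.map_neg_one]
  deriv_neg_one_pos := by simpa [deriv_comp_neg] using hf.deriv_one_pos
  deriv_one_pos := by simpa [deriv_comp_neg] using hf.deriv_neg_one_pos
  pos s hs := neg_pos.2 (hf.neg (-s) ⟨by linarith [hs.2], by linarith [hs.1]⟩)
  neg s hs := neg_lt_zero.2 (hf.pos (-s) ⟨by linarith [hs.2], by linarith [hs.1]⟩)

/-- A bounded solution of `ΔU + c ∂_y U = f(U)` which is nondecreasing in `y` and connects `-1` to
`1` along every vertical line, not necessarily uniformly. -/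
structure MonotoneFront (f : ℝ → ℝ) (c : ℝ) (U : ℝ × ℝ → ℝ) : Prop
    extends BoundedSolution f c U where
  dirDeriv_snd_nonneg : ∀ p, 0 ≤ ∂₂ U p
  tendsto_atTop : ∀ x, Tendsto (fun y => U (x, y)) atTop (𝓝 1)
  tendsto_atBot : ∀ x, Tendsto (fun y => U (x, y)) atBot (𝓝 (-1))

theorem hasDerivAt_prodMk_left {g : ℝ × ℝ → ℝ} (hg : Differentiable ℝ g) (x y : ℝ) :
    HasDerivAt (fun s => g (s, y)) (∂₁ g (x, y)) x := by
  simpa using hasDerivAt_comp_add_smul hg (0, y) (1, 0) x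

theorem hasDerivAt_prodMk_right {g : ℝ × ℝ → ℝ} (hg : Differentiable ℝ g) (x y : ℝ) :
    HasDerivAt (fun s => g (x, s)) (∂₂ g (x, y)) y := by
  simpa using hasDerivAt_comp_add_smul hg (x, 0) (0, 1) y

namespace MonotoneFront

variable {f : ℝ → ℝ} {c : ℝ} {U : ℝ × ℝ → ℝ}

theorem monotone (hU : MonotoneFront f c U) (x : ℝ) : Monotone fun y => U (x, y) :=
  monotone_of_hasDerivAt_nonneg (fun y => hasDerivAt_prodMk_right hU.differentiable x y)
    fun _ => hU.dirDeriv_snd_nonneg _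

theorem neg_one_le (hU : MonotoneFront f c U) (p : ℝ × ℝ) : -1 ≤ U p :=
  (hU.monotone p.1).le_of_tendsto (hU.tendsto_atBot p.1) p.2

theorem le_one (hU : MonotoneFront f c U) (p : ℝ × ℝ) : U p ≤ 1 :=
  (hU.monotone p.1).ge_of_tendsto (hU.tendsto_atTop p.1) p.2

theorem reflect (hU : MonotoneFront f c U) :
    MonotoneFront (fun s => -f (-s)) (-c) fun p => -U (p.1, -p.2) where
  contDiff := (hU.contDiff.comp (contDiff_fst.prodMk contDiff_snd.neg)).neg
  contDiff_nonlinearity := (hU.contDiff_nonlinearity.comp contDiff_neg).neg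
  pde p := by
    rw [driftLaplacian_neg, driftLaplacian_comp_neg_snd, hU.pde, neg_neg]
  bounded := ⟨1, fun p => by
    rw [abs_neg]
    exact abs_le.2 ⟨hU.neg_one_le _, hU.le_one _⟩⟩
  dirDeriv_snd_nonneg p := by
    have hneg : (0, -1) = -((0 : ℝ), (1 : ℝ)) := by simp
    simpa only [dirDeriv_neg, dirDeriv_comp_neg_snd, hneg, dirDeriv_neg_left, neg_neg] using
      hU.dirDeriv_snd_nonneg (p.1, -p.2)
  tendsto_atTop x := by
    simpa using ((hU.tendsto_atBot x).comp tendsto_neg_atTop_atBot).neg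
  tendsto_atBot x := ((hU.tendsto_atTop x).comp tendsto_neg_atBot_atTop).neg

end MonotoneFront

section Energy

theorem abs_sub_le_of_abs_hasDerivAt_le {v v' : ℝ → ℝ} {B : ℝ} (hv : ∀ t, HasDerivAt v (v' t) t)
    (hB : ∀ t, |v' t| ≤ B) (a b : ℝ) : |v b - v a| ≤ B * |b - a| :=
  convex_univ.norm_image_sub_le_of_norm_hasDerivWithin_le
    (fun t _ => (hv t).hasDerivWithinAt) (fun t _ => hB t) trivial trivial

theorem abs_dirDeriv_le_abs_sub_div_add {E : Type*} [NormedAddCommGroup E] [NormedSpace ℝ E]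
    {g : E → ℝ} {e : E} {B r : ℝ} (hg : ContDiff ℝ 2 g)
    (hB : ∀ p, |dirDeriv e (dirDeriv e g) p| ≤ B) (hr : 0 < r) (p : E) :
    |dirDeriv e g p| ≤ |g (p + r • e) - g p| / r + B * r := by
  have hB₀ : 0 ≤ B := (abs_nonneg _).trans (hB p)
  have hv := hasDerivAt_comp_add_smul (hg.differentiable (by norm_num)) p e
  have hv' := hasDerivAt_comp_add_smul
    ((contDiff_dirDeriv (m := 1) hg (by norm_num) e).differentiable (by norm_num)) p e
  obtain ⟨t, ht, hslope⟩ := exists_hasDerivAt_eq_slope _ _ hr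
    (fun t _ => (hv t).continuousAt.continuousWithinAt) fun t _ => hv t
  have hmean : |dirDeriv e g (p + t • e)| = |g (p + r • e) - g p| / r := by
    rw [hslope, abs_div, sub_zero, abs_of_pos hr, zero_smul, add_zero]
  have hosc : |dirDeriv e g p - dirDeriv e g (p + t • e)| ≤ B * r := by
    have h := abs_sub_le_of_abs_hasDerivAt_le hv' (fun s => hB _) t 0
    rw [zero_smul, add_zero, zero_sub, abs_neg, abs_of_nonneg ht.1.le] at h
    exact h.trans (mul_le_mul_of_nonneg_left ht.2.le hB₀)
  linarith [abs_sub_abs_le_abs_sub (dirDeriv e g p) (dirDeriv e g (p + t • e))]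

theorem tendsto_dirDeriv_zero {E ι : Type*} [NormedAddCommGroup E] [NormedSpace ℝ E] {g : E → ℝ}
    {e : E} {B : ℝ} {l : Filter ι} {P : ι → E} (hg : ContDiff ℝ 2 g)
    (hB : ∀ p, |dirDeriv e (dirDeriv e g) p| ≤ B)
    (hsub : ∀ r : ℝ, 0 < r → Tendsto (fun i => g (P i + r • e) - g (P i)) l (𝓝 0)) :
    Tendsto (fun i => dirDeriv e g (P i)) l (𝓝 0) := by
  rw [Metric.tendsto_nhds]
  intro ε hε
  obtain ⟨r, hr, hrε⟩ : ∃ r > 0, B * r < ε / 2 := by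
    have hlim : Tendsto (fun r => B * r) (𝓝[>] 0) (𝓝 (B * 0)) :=
      (tendsto_id.const_mul B).mono_left nhdsWithin_le_nhds
    exact (eventually_mem_nhdsWithin.and
      (hlim.eventually_lt_const ((mul_zero B).trans_lt (half_pos hε)))).exists
  have hquot : Tendsto (fun i => |g (P i + r • e) - g (P i)| / r) l (𝓝 0) := by
    simpa using (hsub r hr).abs.div_const r
  filter_upwards [hquot.eventually_lt_const (half_pos hε)] with i hi
  rw [dist_zero_right, Real.norm_eq_abs]
  linarith [abs_dirDeriv_le_abs_sub_div_add hg hB hr (P i)]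

/-- The vertical component of the energy current `(∂_x U ∂_y U, flux)`, whose divergence is
`-c (∂_y U)²` for solutions of `ΔU + c ∂_y U = F'(U)`. -/
noncomputable def flux (F : ℝ → ℝ) (U : ℝ × ℝ → ℝ) (p : ℝ × ℝ) : ℝ :=
  ∂₂ U p ^ 2 / 2 - ∂₁ U p ^ 2 / 2 - F (U p)

namespace BoundedSolution

variable {f F : ℝ → ℝ} {a c : ℝ} {U : ℝ × ℝ → ℝ}

theorem continuous_flux (hU : BoundedSolution f c U) (hF : Continuous F) :
    Continuous (flux F U) :=
  have hsq (e : ℝ × ℝ) : Continuous fun p => dirDeriv e U p ^ 2 / 2 :=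
    ((hU.contDiff_dirDeriv e).continuous.pow 2).div_const 2
  ((hsq _).sub (hsq _)).sub (hF.comp hU.contDiff.continuous)

theorem differentiable_dirDeriv_sq (hU : BoundedSolution f c U) (e : ℝ × ℝ) :
    Differentiable ℝ fun p => dirDeriv e U p ^ 2 / 2 := by
  have hd := differentiable_dirDeriv hU.contDiff_two e
  fun_prop

theorem differentiable_flux (hU : BoundedSolution f c U) (hF : Differentiable ℝ F) :
    Differentiable ℝ (flux F U) :=
  ((hU.differentiable_dirDeriv_sq _).sub (hU.differentiable_dirDeriv_sq _)).sub
    (hF.comp hU.differentiable)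

theorem dirDeriv_add_dirDeriv_flux (hU : BoundedSolution f c U) (hF : ∀ s, HasDerivAt F (f s) s)
    (p : ℝ × ℝ) :
    ∂₁ (fun q => ∂₁ U q * ∂₂ U q) p + ∂₂ (flux F U) p = -(c * ∂₂ U p ^ 2) := by
  have hd (e : ℝ × ℝ) := differentiable_dirDeriv hU.contDiff_two e
  have hsq (s : ℝ) : HasDerivAt (fun s : ℝ => s ^ 2 / 2) s s :=
    ((hasDerivAt_pow 2 s).div_const 2).congr_deriv (by simp)
  have hFd : Differentiable ℝ F := fun s => (hF s).differentiableAt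
  have hflux : ∂₂ (flux F U) p =
      ∂₂ U p * ∂₂ (∂₂ U) p - ∂₁ U p * ∂₂ (∂₁ U) p - f (U p) * ∂₂ U p := by
    have hsqd := hU.differentiable_dirDeriv_sq
    unfold flux
    simp only [dirDeriv_sub ((hsqd _).fun_sub (hsqd _)) (hFd.fun_comp hU.differentiable),
      dirDeriv_sub (hsqd _) (hsqd _), dirDeriv_comp hsq (hd _), dirDeriv_comp hF hU.differentiable]
  have hpde := hU.pde p
  rw [driftLaplacian] at hpde
  simp only [dirDeriv_mul (hd _) (hd _), hflux, dirDeriv_comm hU.contDiff_two (1, 0) (0, 1)]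
  linear_combination ∂₂ U p * hpde

theorem energy_identity (hU : BoundedSolution f c U) (hF : ∀ s, HasDerivAt F (f s) s)
    {a b : ℝ × ℝ} (hab : a ≤ b) :
    ∫ p in Set.Icc a b, -(c * ∂₂ U p ^ 2) =
      (((∫ x in a.1..b.1, flux F U (x, b.2)) - ∫ x in a.1..b.1, flux F U (x, a.2)) +
        ∫ y in a.2..b.2, ∂₁ U (b.1, y) * ∂₂ U (b.1, y)) -
        ∫ y in a.2..b.2, ∂₁ U (a.1, y) * ∂₂ U (a.1, y) := by
  have hd (e : ℝ × ℝ) := differentiable_dirDeriv hU.contDiff_two e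
  have hmul : Differentiable ℝ fun q => ∂₁ U q * ∂₂ U q := (hd _).mul (hd _)
  have hflux := hU.differentiable_flux fun s => (hF s).differentiableAt
  have hcont : Continuous fun p => -(c * ∂₂ U p ^ 2) :=
    (continuous_const.mul ((hd _).continuous.pow 2)).neg
  simp only [← hU.dirDeriv_add_dirDeriv_flux hF] at hcont ⊢
  exact integral_divergence_prod_Icc_of_hasFDerivAt_of_le _ _ _ _ _ _ hab
    hmul.continuous.continuousOn hflux.continuous.continuousOn
    (fun p _ => (hmul p).hasFDerivAt) (fun p _ => (hflux p).hasFDerivAt)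
    (hcont.continuousOn.integrableOn_compact isCompact_Icc)

theorem tendsto_dirDeriv_vertical (hU : BoundedSolution f c U) {l : Filter ℝ}
    (hl : ∀ r, Tendsto (· + r) l l) (h : ∀ x, Tendsto (fun y => U (x, y)) l (𝓝 a))
    {e : ℝ × ℝ} (he : ‖e‖ ≤ 1) (x : ℝ) : Tendsto (fun y => dirDeriv e U (x, y)) l (𝓝 0) := by
  obtain ⟨B, -, hB⟩ := hU.exists_norm_fderiv_dirDeriv_le
  refine tendsto_dirDeriv_zero hU.contDiff_two
    (fun p => (abs_dirDeriv_le he _ p).trans (hB e he p)) fun r _ => ?_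
  simpa [Prod.smul_def] using ((h (x + r * e.1)).comp (hl (r * e.2))).sub (h x)

theorem tendsto_flux (hU : BoundedSolution f c U) (hF : Continuous F) {l : Filter ℝ}
    (hl : ∀ r, Tendsto (· + r) l l) (h : ∀ x, Tendsto (fun y => U (x, y)) l (𝓝 a)) (x : ℝ) :
    Tendsto (fun y => flux F U (x, y)) l (𝓝 (-F a)) := by
  have hsq {e : ℝ × ℝ} (he : ‖e‖ ≤ 1) : Tendsto (fun y => dirDeriv e U (x, y) ^ 2 / 2) l (𝓝 0) := by
    simpa using ((hU.tendsto_dirDeriv_vertical hl h he x).pow 2).div_const 2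
  have hsub := ((hsq (e := (0, 1)) (by simp)).sub (hsq (e := (1, 0)) (by simp))).sub
    ((hF.tendsto a).comp (h x))
  rwa [sub_self, zero_sub] at hsub

theorem exists_abs_flux_le (hU : BoundedSolution f c U) (hF : Continuous F) :
    ∃ N, ∀ p, |flux F U p| ≤ N := by
  obtain ⟨B, -, hB⟩ := hU.exists_norm_fderiv_le
  obtain ⟨L, -, hL⟩ := hU.exists_abs_comp_le hF
  refine ⟨B ^ 2 + L, fun p => ?_⟩
  have hsq {e : ℝ × ℝ} (he : ‖e‖ ≤ 1) : dirDeriv e U p ^ 2 ≤ B ^ 2 :=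
    sq_le_sq.2 (((abs_dirDeriv_le he U p).trans (hB p)).trans (le_abs_self B))
  have h₁ := hsq (e := (1, 0)) (by simp)
  have h₂ := hsq (e := (0, 1)) (by simp)
  have hFp := abs_le.1 (hL p)
  rw [flux, abs_le]
  constructor <;> linarith [sq_nonneg (∂₁ U p), sq_nonneg (∂₂ U p), hFp.1, hFp.2]

theorem tendsto_integral_flux (hU : BoundedSolution f c U) (hF : Continuous F) {l : Filter ℝ}
    [l.IsCountablyGenerated] (hl : ∀ r, Tendsto (· + r) l l)
    (h : ∀ x, Tendsto (fun y => U (x, y)) l (𝓝 a)) (n : ℝ) :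
    Tendsto (fun y => ∫ x in (-n)..n, flux F U (x, y)) l (𝓝 (∫ _ in (-n)..n, -F a)) := by
  obtain ⟨N, hN⟩ := hU.exists_abs_flux_le hF
  have hcont := hU.continuous_flux hF
  exact intervalIntegral.tendsto_integral_filter_of_dominated_convergence (fun _ => N)
    (.of_forall fun y => (hcont.comp (by fun_prop)).aestronglyMeasurable)
    (.of_forall fun y => .of_forall fun x _ => hN (x, y)) intervalIntegrable_const
    (.of_forall fun x _ => hU.tendsto_flux hF hl h x)

end BoundedSolution

namespace MonotoneFront

variable {f F : ℝ → ℝ} {B c : ℝ} {U : ℝ × ℝ → ℝ}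

theorem abs_integral_mul_le (hU : MonotoneFront f c U) (hB : ∀ p, |∂₁ U p| ≤ B) (x : ℝ) {m : ℝ}
    (hm : 0 ≤ m) : |∫ y in (-m)..m, ∂₁ U (x, y) * ∂₂ U (x, y)| ≤ 2 * B := by
  have hB₀ : 0 ≤ B := (abs_nonneg _).trans (hB 0)
  have hint : IntervalIntegrable (fun y => ∂₂ U (x, y)) volume (-m) m :=
    ((hU.contDiff_dirDeriv (0, 1)).continuous.comp (by fun_prop)).intervalIntegrable _ _
  have hrange : U (x, m) - U (x, -m) ≤ 2 := by linarith [hU.le_one (x, m), hU.neg_one_le (x, -m)]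
  calc |∫ y in (-m)..m, ∂₁ U (x, y) * ∂₂ U (x, y)| ≤ ∫ y in (-m)..m, B * ∂₂ U (x, y) := by
        rw [← Real.norm_eq_abs]
        refine intervalIntegral.norm_integral_le_of_norm_le (by linarith)
          (.of_forall fun y _ => ?_) (hint.const_mul B)
        rw [norm_mul, Real.norm_eq_abs, norm_of_nonneg (hU.dirDeriv_snd_nonneg _)]
        exact mul_le_mul_of_nonneg_right (hB _) (hU.dirDeriv_snd_nonneg _)
    _ = B * (U (x, m) - U (x, -m)) := by
        rw [intervalIntegral.integral_const_mul, intervalIntegral.integral_eq_sub_of_hasDerivAt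
          (fun y _ => hasDerivAt_prodMk_right hU.differentiable x y) hint]
    _ ≤ 2 * B := by linarith [mul_le_mul_of_nonneg_left hrange hB₀]

theorem tendsto_integral_flux_sub (hU : MonotoneFront f c U) (hF : Continuous F)
    (hbal : F 1 = F (-1)) (n : ℝ) :
    Tendsto (fun m => (∫ x in (-n)..n, flux F U (x, m)) - ∫ x in (-n)..n, flux F U (x, -m)) atTop
      (𝓝 0) := by
  have htop := hU.tendsto_integral_flux hF
    (fun r => tendsto_atTop_add_const_right _ r tendsto_id) hU.tendsto_atTop n
  have hbot := hU.tendsto_integral_flux hF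
    (fun r => tendsto_atBot_add_const_right _ r tendsto_id) hU.tendsto_atBot n
  simpa [hbal] using htop.sub (hbot.comp tendsto_neg_atTop_atBot)

theorem mul_setIntegral_sq_le (hU : MonotoneFront f c U) (hF : ∀ s, HasDerivAt F (f s) s)
    (hbal : F 1 = F (-1)) (hB : ∀ p, |∂₁ U p| ≤ B) {n : ℝ} (hn : 0 ≤ n) :
    |c| * ∫ p in Set.Icc (-n, -n) (n, n), ∂₂ U p ^ 2 ≤ 4 * B := by
  have hFc : Continuous F := continuous_iff_continuousAt.2 fun s => (hF s).continuousAt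
  have hcont : Continuous fun p => ∂₂ U p ^ 2 := (hU.contDiff_dirDeriv _).continuous.pow 2
  have hlim := ((hU.tendsto_integral_flux_sub hFc hbal n).abs.add_const (4 * B))
  rw [abs_zero, zero_add] at hlim
  refine ge_of_tendsto hlim ?_
  filter_upwards [eventually_ge_atTop n] with m hm
  have hle : ((-n, -m) : ℝ × ℝ) ≤ (n, m) := Prod.mk_le_mk.2 ⟨by linarith, by linarith⟩
  have henergy := hU.energy_identity hF hle
  have hside (x : ℝ) := hU.abs_integral_mul_le hB x (hn.trans hm)
  rw [integral_neg, integral_const_mul] at henergy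
  calc |c| * ∫ p in Set.Icc (-n, -n) (n, n), ∂₂ U p ^ 2
      ≤ |c| * ∫ p in Set.Icc (-n, -m) (n, m), ∂₂ U p ^ 2 := by
        refine mul_le_mul_of_nonneg_left (setIntegral_mono_set
          (hcont.continuousOn.integrableOn_compact isCompact_Icc)
          (.of_forall fun p => sq_nonneg _) (Set.Icc_subset_Icc ?_ ?_).eventuallyLE) (abs_nonneg c)
        · exact Prod.mk_le_mk.2 ⟨le_rfl, by linarith⟩
        · exact Prod.mk_le_mk.2 ⟨le_rfl, hm⟩
    _ = |-(c * ∫ p in Set.Icc (-n, -m) (n, m), ∂₂ U p ^ 2)| := by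
        rw [abs_neg, abs_mul, abs_of_nonneg (integral_nonneg fun p => sq_nonneg _)]
    _ ≤ _ := by
        rw [henergy]
        refine (abs_sub _ _).trans ((add_le_add (abs_add_le _ _) (hside _)).trans ?_)
        linarith [hside n]

theorem integrable_dirDeriv_snd_sq (hU : MonotoneFront f c U) (hc : c ≠ 0)
    (hF : ∀ s, HasDerivAt F (f s) s) (hbal : F 1 = F (-1)) :
    Integrable fun p => ∂₂ U p ^ 2 := by
  obtain ⟨B, -, hB⟩ := hU.exists_norm_fderiv_le
  have hcont : Continuous fun p => ∂₂ U p ^ 2 := (hU.contDiff_dirDeriv _).continuous.pow 2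
  have hball (n : ℝ) : closedBall (0 : ℝ × ℝ) n = Set.Icc (-n, -n) (n, n) := by
    rw [← Set.Icc_prod_Icc, ← Prod.mk_zero_zero, ← closedBall_prod_same, Real.closedBall_eq_Icc]
    simp
  refine (aecover_closedBall (x := (0 : ℝ × ℝ)) (l := atTop) (r := id)
    tendsto_id).integrable_of_integral_bounded_of_nonneg_ae (4 * B / |c|)
    (fun n => hcont.continuousOn.integrableOn_compact (isCompact_closedBall _ _))
    (.of_forall fun p => sq_nonneg _) ?_
  filter_upwards [eventually_ge_atTop 0] with n hn
  rw [le_div_iff₀' (abs_pos.2 hc), hball]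
  exact hU.mul_setIntegral_sq_le hF hbal
    (fun p => (abs_dirDeriv_le (by simp) U p).trans (hB p)) hn

end MonotoneFront

end Energy

section VanishingAtInfinity

open Bornology
open scoped ENNReal

theorem tendsto_setIntegral_ball_cobounded {X G : Type*} [PseudoMetricSpace X] [MeasurableSpace X]
    [OpensMeasurableSpace X] [NormedAddCommGroup G] [NormedSpace ℝ G] {μ : Measure X} {g : X → G}
    (hg : Integrable g μ) (r : ℝ) :
    Tendsto (fun p => ∫ q in ball p r, g q ∂μ) (cobounded X) (𝓝 0) := by
  rcases isEmpty_or_nonempty X with hX | ⟨⟨o⟩⟩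
  · simp [filter_eq_bot_of_isEmpty]
  have : (cobounded X).IsCountablyGenerated := by
    rw [← comap_dist_right_atTop o]
    infer_instance
  simp only [← integral_indicator measurableSet_ball]
  rw [← integral_zero X G (μ := μ)]
  refine tendsto_integral_filter_of_dominated_convergence (fun q => ‖g q‖)
    (.of_forall fun p => (hg.indicator measurableSet_ball).aestronglyMeasurable)
    (.of_forall fun p => .of_forall fun q => norm_indicator_le_norm_self _ _) hg.norm
    (.of_forall fun q => ?_)
  refine tendsto_const_nhds.congr' ?_
  filter_upwards [isBounded_def.1 (isBounded_ball (x := q) (r := r))] with p hp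
  rw [Set.indicator_of_notMem fun hq => hp (mem_ball_comm.1 hq)]

theorem tendsto_cobounded_of_memLp_of_uniformContinuous {E G : Type*} [NormedAddCommGroup E]
    [NormedSpace ℝ E] [FiniteDimensional ℝ E] [MeasurableSpace E] [BorelSpace E]
    [NormedAddCommGroup G] {μ : Measure E} [μ.IsAddHaarMeasure] {g : E → G} {k : ℝ≥0∞}
    (hk₀ : k ≠ 0) (hk : k ≠ ∞) (hg : MemLp g k μ) (hunif : UniformContinuous g) :
    Tendsto g (cobounded E) (𝓝 0) := by
  rw [Metric.tendsto_nhds]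
  intro ε hε
  obtain ⟨r, hr, hosc⟩ := Metric.uniformContinuous_iff.1 hunif (ε / 2) (half_pos hε)
  have hint := hg.integrable_norm_rpow hk₀ hk
  have hμ : 0 < μ.real (ball (0 : E) r) :=
    ENNReal.toReal_pos (measure_ball_pos μ 0 hr).ne' measure_ball_lt_top.ne
  filter_upwards [(tendsto_setIntegral_ball_cobounded hint r).eventually_lt_const
    (mul_pos (rpow_pos_of_pos (half_pos hε) k.toReal) hμ)] with p hp
  by_contra! hlarge
  rw [dist_zero_right] at hlarge
  have hge : (ε / 2) ^ k.toReal * μ.real (ball p r) ≤ ∫ q in ball p r, ‖g q‖ ^ k.toReal ∂μ := by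
    refine setIntegral_ge_of_const_le_real measurableSet_ball measure_ball_lt_top.ne
      (fun q hq => ?_) hint.integrableOn
    have hpq := hosc (mem_ball.1 hq)
    rw [dist_comm, dist_eq_norm] at hpq
    have hgq : ε / 2 ≤ ‖g q‖ := by linarith [norm_sub_norm_le (g p) (g q)]
    gcongr
  rw [Measure.real, Measure.addHaar_ball_center, ← Measure.real] at hge
  exact hp.not_ge hge

theorem eventually_cobounded_forall_mem_closedBall {X : Type*} [PseudoMetricSpace X]
    {P : X → Prop} (h : ∀ᶠ q in cobounded X, P q) (r : ℝ) :
    ∀ᶠ p in cobounded X, ∀ q ∈ closedBall p r, P q := by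
  have hbdd : IsBounded {q | ¬P q} := by
    rw [isBounded_def]
    filter_upwards [h] with q hq using not_not.2 hq
  filter_upwards [isBounded_def.1 (hbdd.cthickening (δ := r))] with p hp q hq
  by_contra hPq
  exact hp (closedBall_subset_cthickening hPq r (mem_closedBall_comm.1 hq))

end VanishingAtInfinity

section FarFromZeroLevelSet

open Bornology

namespace MonotoneFront

variable {f F : ℝ → ℝ} {c : ℝ} {U : ℝ × ℝ → ℝ}

theorem tendsto_dirDeriv_snd_cobounded (hU : MonotoneFront f c U) (hc : c ≠ 0)
    (hF : ∀ s, HasDerivAt F (f s) s) (hbal : F 1 = F (-1)) :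
    Tendsto (∂₂ U) (cobounded (ℝ × ℝ)) (𝓝 0) := by
  obtain ⟨B, hB₀, hB⟩ := hU.exists_norm_fderiv_dirDeriv_le
  have hcont := hU.contDiff_dirDeriv (0, 1)
  refine tendsto_cobounded_of_memLp_of_uniformContinuous (μ := volume) two_ne_zero
    ENNReal.ofNat_ne_top ((memLp_two_iff_integrable_sq hcont.continuous.aestronglyMeasurable).2
      (hU.integrable_dirDeriv_snd_sq hc hF hbal))
    (lipschitzWith_of_nnnorm_fderiv_le (𝕜 := ℝ) (C := ⟨B, hB₀.le⟩)
      (hcont.differentiable (by norm_num)) fun p => ?_).uniformContinuous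
  exact NNReal.coe_le_coe.1 (hB (0, 1) (by simp) p)

theorem tendsto_dirDeriv_snd_snd_cobounded (hU : MonotoneFront f c U) (hc : c ≠ 0)
    (hF : ∀ s, HasDerivAt F (f s) s) (hbal : F 1 = F (-1)) :
    Tendsto (∂₂ (∂₂ U)) (cobounded (ℝ × ℝ)) (𝓝 0) := by
  obtain ⟨K, hK, hbound⟩ := hU.exists_norm_fderiv_dirDeriv_le_mul
  rw [Metric.tendsto_nhds]
  intro ε hε
  have hsmall := (hU.tendsto_dirDeriv_snd_cobounded hc hF hbal).abs.eventually_lt_const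
    (u := ε / (2 * K)) (by rw [abs_zero]; positivity)
  filter_upwards [eventually_cobounded_forall_mem_closedBall hsmall 1] with p hp
  rw [dist_zero_right, Real.norm_eq_abs]
  calc |∂₂ (∂₂ U) p| ≤ K * (ε / (2 * K)) :=
        (abs_dirDeriv_le (by simp) _ p).trans (hbound _ p _ fun q hq => (hp q hq).le)
    _ < ε := by
        field_simp
        linarith

theorem eventually_nonlinearity_le (hU : MonotoneFront f c U) (hc : c ≠ 0)
    (hF : ∀ s, HasDerivAt F (f s) s) (hbal : F 1 = F (-1)) {ε : ℝ} (hε : 0 < ε) :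
    ∀ᶠ p in cobounded (ℝ × ℝ), f (U p) ≤ ∂₁ (∂₁ U) p + ε := by
  have hlim := (hU.tendsto_dirDeriv_snd_snd_cobounded hc hF hbal).add
    ((hU.tendsto_dirDeriv_snd_cobounded hc hF hbal).const_mul c)
  rw [mul_zero, add_zero] at hlim
  filter_upwards [hlim.eventually_le_const hε] with p hp
  have hpde := hU.pde p
  rw [driftLaplacian] at hpde
  linarith

end MonotoneFront

theorem hasDerivAt_comp_neg {v : ℝ → ℝ} {v' t : ℝ} (hv : HasDerivAt v v' (-t)) :
    HasDerivAt (fun s => v (-s)) (-v') t := by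
  simpa [Function.comp_def] using hv.scomp t (hasDerivAt_neg t)

theorem mul_sub_le_sub_of_le_hasDerivAt {v v' : ℝ → ℝ} {a b k : ℝ} (hab : a ≤ b)
    (hv : ∀ t, HasDerivAt v (v' t) t) (hk : ∀ t ∈ Set.Icc a b, k ≤ v' t) :
    k * (b - a) ≤ v b - v a :=
  (convex_Icc a b).mul_sub_le_image_sub_of_le_deriv
    (fun t _ => (hv t).continuousAt.continuousWithinAt)
    (fun t _ => (hv t).differentiableAt.differentiableWithinAt)
    (fun t ht => (hv t).deriv ▸ hk t (interior_subset ht))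
    a (Set.left_mem_Icc.2 hab) b (Set.right_mem_Icc.2 hab) hab

theorem mul_sub_le_sub_of_le_second_deriv {v v' v'' : ℝ → ℝ} {k ε τ T : ℝ}
    (hv : ∀ t, HasDerivAt v (v' t) t) (hv' : ∀ t, HasDerivAt v' (v'' t) t) (h₀ : 0 ≤ v' 0)
    (hτ : 0 ≤ τ) (hτT : τ ≤ T) (hε : 0 ≤ ε) (hk : ∀ t ∈ Set.Icc 0 τ, k ≤ v'' t)
    (hεv : ∀ t ∈ Set.Icc τ T, -ε ≤ v'' t) :
    (k * τ - ε * (T - τ)) * (T - τ) ≤ v T - v τ := by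
  refine mul_sub_le_sub_of_le_hasDerivAt hτT hv fun t ht => ?_
  have hstart := mul_sub_le_sub_of_le_hasDerivAt hτ hv' hk
  have hrest := mul_sub_le_sub_of_le_hasDerivAt ht.1 hv' fun s hs =>
    hεv s ⟨hs.1, hs.2.trans ht.2⟩
  have hmono : ε * (t - τ) ≤ ε * (T - τ) :=
    mul_le_mul_of_nonneg_left (sub_le_sub_right ht.2 τ) hε
  linarith

-- Passing to the even part of `v` makes the first derivative vanish at `0`.
theorem mul_sub_le_even_sub_of_le_second_deriv {v v' v'' : ℝ → ℝ} {k ε τ T : ℝ}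
    (hv : ∀ t, HasDerivAt v (v' t) t) (hv' : ∀ t, HasDerivAt v' (v'' t) t)
    (hτ : 0 ≤ τ) (hτT : τ ≤ T) (hε : 0 ≤ ε) (hk : ∀ t, |t| ≤ τ → k ≤ v'' t)
    (hεv : ∀ t, |t| ≤ T → -ε ≤ v'' t) :
    2 * ((k * τ - ε * (T - τ)) * (T - τ)) ≤ (v T + v (-T)) - (v τ + v (-τ)) := by
  have heven (t : ℝ) : HasDerivAt (fun t => v t + v (-t)) (v' t - v' (-t)) t := by
    simpa only [sub_eq_add_neg] using (hv t).fun_add (hasDerivAt_comp_neg (hv (-t)))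
  have hodd (t : ℝ) : HasDerivAt (fun t => v' t - v' (-t)) (v'' t + v'' (-t)) t := by
    simpa only [sub_neg_eq_add] using (hv' t).fun_sub (hasDerivAt_comp_neg (hv' (-t)))
  have hgrowth := mul_sub_le_sub_of_le_second_deriv (k := 2 * k) (ε := 2 * ε) heven hodd (by simp)
    hτ hτT (by positivity)
    (fun t ht => by
      have habs : |t| ≤ τ := (abs_of_nonneg ht.1).trans_le ht.2
      linarith [hk t habs, hk (-t) (by rwa [abs_neg])])
    (fun t ht => by
      have habs : |t| ≤ T := (abs_of_nonneg (hτ.trans ht.1)).trans_le ht.2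
      linarith [hεv t habs, hεv (-t) (by rwa [abs_neg])])
  linarith

theorem exists_second_deriv_lt {f : ℝ → ℝ} {a b B s : ℝ} (hf : ContinuousAt f s)
    (hnonneg : ∀ r ∈ Set.Ico a b, 0 ≤ f r) (hs : s ∈ Set.Ico a b) (hfs : 0 < f s) (hB : 0 < B) :
    ∃ T > 0, ∃ ε > 0, ∀ v v' v'' : ℝ → ℝ, (∀ t, HasDerivAt v (v' t) t) →
      (∀ t, HasDerivAt v' (v'' t) t) → (∀ t, |v' t| ≤ B) → v 0 = s →
      (∀ t, |t| ≤ T → v t ∈ Set.Ico a b) → ∃ t, |t| ≤ T ∧ v'' t + ε < f (v t) := by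
  obtain ⟨η, hη, hnear⟩ := Metric.nhds_basis_closedBall.eventually_iff.1
    (hf.eventually_const_le (half_lt_self hfs))
  set m := f s / 2
  have hm : 0 < m := half_pos hfs
  have hab : 0 < b - a := sub_pos.2 (hs.1.trans_lt hs.2)
  set τ := η / B
  have hτ : 0 < τ := div_pos hη hB
  set T := τ + 2 * (b - a) / (m * τ)
  have hτT : τ ≤ T := le_add_of_nonneg_right (by positivity)
  have hT : 0 < T := hτ.trans_le hτT
  set ε := m * τ / (2 * T)
  refine ⟨T, hT, ε, by positivity, fun v v' v'' hv hv' hvB hv₀ hrange => ?_⟩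
  by_contra! hconvex
  have hstart (t : ℝ) (ht : |t| ≤ τ) : m - ε ≤ v'' t := by
    have hdist : |v t - s| ≤ η := by
      have h := abs_sub_le_of_abs_hasDerivAt_le hv hvB 0 t
      rw [hv₀, sub_zero] at h
      exact h.trans ((mul_le_mul_of_nonneg_left ht hB.le).trans_eq (mul_div_cancel₀ η hB.ne'))
    linarith [hconvex t (ht.trans hτT), hnear (mem_closedBall_iff_norm.2 hdist)]
  have hgrowth := mul_sub_le_even_sub_of_le_second_deriv hv hv' hτ.le hτT
    (show 0 ≤ ε by positivity) hstart fun t ht => by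
      linarith [hconvex t ht, hnonneg _ (hrange t ht)]
  have hεT : ε * T = m * τ / 2 := by
    simp only [ε]
    field_simp
  have hlength : m * τ / 2 * (T - τ) = b - a := by
    simp only [T]
    field_simp
    ring
  rw [show (m - ε) * τ - ε * (T - τ) = m * τ / 2 by linarith, hlength] at hgrowth
  have hpos {t : ℝ} (ht : 0 < t) (htT : t ≤ T) : |t| ≤ T ∧ |-t| ≤ T := by
    simpa [abs_of_pos ht] using htT
  linarith [(hrange T (hpos hT le_rfl).1).2, (hrange (-T) (hpos hT le_rfl).2).2,
    (hrange τ (hpos hτ hτT).1).1, (hrange (-τ) (hpos hτ hτT).2).1]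

namespace MonotoneFront

variable {f F : ℝ → ℝ} {c s δ : ℝ} {U : ℝ × ℝ → ℝ}

theorem eventually_exists_nonneg_of_eq (hU : MonotoneFront f c U) (hc : c ≠ 0) (hf : Bistable f)
    (hF : ∀ s, HasDerivAt F (f s) s) (hbal : F 1 = F (-1)) (hs : s ∈ Set.Ioo (-1) 0) :
    ∃ T > 0, ∀ᶠ p in cobounded (ℝ × ℝ), U p = s → ∃ q ∈ closedBall p T, 0 ≤ U q := by
  obtain ⟨B, hB, hgrad⟩ := hU.exists_norm_fderiv_le
  have hnonneg (r : ℝ) (hr : r ∈ Set.Ico (-1) 0) : 0 ≤ f r := by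
    rcases hr.1.eq_or_lt with rfl | h
    · exact hf.map_neg_one.ge
    · exact (hf.pos r ⟨h, hr.2⟩).le
  obtain ⟨T, hT, ε, hε, hexists⟩ := exists_second_deriv_lt
    hU.contDiff_nonlinearity.continuous.continuousAt hnonneg (Set.Ioo_subset_Ico_self hs)
    (hf.pos s hs) hB
  refine ⟨T, hT, ?_⟩
  filter_upwards [eventually_cobounded_forall_mem_closedBall
    (hU.eventually_nonlinearity_le hc hF hbal hε) T] with p hp hps
  by_contra! hneg
  have hmem {t : ℝ} (ht : |t| ≤ T) : p + t • (1, 0) ∈ closedBall p T := by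
    simpa [mem_closedBall_iff_norm, norm_smul] using ht
  obtain ⟨t, ht, hlt⟩ := hexists _ _ _ (hasDerivAt_comp_add_smul hU.differentiable p (1, 0))
    (hasDerivAt_comp_add_smul (differentiable_dirDeriv hU.contDiff_two _) p (1, 0))
    (fun t => (abs_dirDeriv_le (by simp) U _).trans (hgrad _)) (by simpa using hps)
    fun t ht => ⟨hU.neg_one_le _, hneg _ (hmem ht)⟩
  exact hlt.not_ge (hp _ (hmem ht))

theorem exists_eq_of_le (hU : MonotoneFront f c U) (hs : -1 < s) {p : ℝ × ℝ} (hp : s ≤ U p) :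
    ∃ y ≤ p.2, U (p.1, y) = s := by
  obtain ⟨z, hz, hzp⟩ := (((hU.tendsto_atBot p.1).eventually_lt_const hs).and
    (eventually_le_atBot p.2)).exists
  have hcont : Continuous fun y => U (p.1, y) := hU.contDiff.continuous.comp (by fun_prop)
  obtain ⟨y, hy, hys⟩ := intermediate_value_Icc hzp hcont.continuousOn ⟨hz.le, hp⟩
  exact ⟨y, hy.2, hys⟩

theorem exists_le_of_neg_on_ball (hU : MonotoneFront f c U) (hc : c ≠ 0) (hf : Bistable f)
    (hF : ∀ s, HasDerivAt F (f s) s) (hbal : F 1 = F (-1)) (hs : s ∈ Set.Ioo (-1) 0) :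
    ∃ R > 0, ∀ p, (∀ q ∈ ball p R, U q < 0) → U p ≤ s := by
  obtain ⟨y₀, hy₀⟩ := ((hU.tendsto_atTop 0).eventually_const_lt one_pos).exists
  obtain ⟨T, hT, hfar⟩ := hU.eventually_exists_nonneg_of_eq hc hf hF hbal hs
  obtain ⟨r, -, hr⟩ := (hasBasis_cobounded_compl_ball (0, y₀)).eventually_iff.1 hfar
  refine ⟨max r T + 1, by positivity, fun p hp => ?_⟩
  by_contra! hps
  -- Sliding down to the level `s` keeps the ball inside `{U < 0}`, hence away from `(0, y₀)`.
  obtain ⟨y, hy, hys⟩ := hU.exists_eq_of_le hs.1 hps.le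
  have hneg (q : ℝ × ℝ) (hq : q ∈ ball (p.1, y) (max r T + 1)) : U q < 0 := by
    refine (hU.monotone q.1 (le_add_of_nonneg_right (sub_nonneg.2 hy))).trans_lt
      (hp (q.1, q.2 + (p.2 - y)) ?_)
    rw [mem_ball, Prod.dist_eq, Real.dist_eq, Real.dist_eq] at hq ⊢
    simpa [add_sub_right_comm] using hq
  have hdist : (p.1, y) ∉ ball (0, y₀) r := fun hmem => (hneg (0, y₀)
    (ball_subset_ball (by linarith [le_max_left r T]) (mem_ball_comm.1 hmem))).not_gt hy₀
  obtain ⟨q, hq, hUq⟩ := hr hdist hys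
  exact (hneg q (closedBall_subset_ball (by linarith [le_max_right r T]) hq)).not_ge hUq

theorem exists_abs_add_one_le (hU : MonotoneFront f c U) (hc : c ≠ 0) (hf : Bistable f)
    (hF : ∀ s, HasDerivAt F (f s) s) (hbal : F 1 = F (-1)) (hδ : 0 < δ) :
    ∃ R > 0, ∀ p, (∀ q ∈ ball p R, U q < 0) → |U p + 1| ≤ δ := by
  obtain ⟨s, hs, hsδ⟩ : ∃ s ∈ Set.Ioo (-1 : ℝ) 0, s ≤ -1 + δ :=
    ⟨-1 + min δ (1 / 2), ⟨by simp [hδ], by linarith [min_le_right δ (1 / 2)]⟩, by simp⟩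
  obtain ⟨R, hR, hle⟩ := hU.exists_le_of_neg_on_ball hc hf hF hbal hs
  refine ⟨R, hR, fun p hp => ?_⟩
  rw [abs_of_nonneg (by linarith [hU.neg_one_le p])]
  linarith [hle p hp]

theorem exists_abs_sub_one_le (hU : MonotoneFront f c U) (hc : c ≠ 0) (hf : Bistable f)
    (hF : ∀ s, HasDerivAt F (f s) s) (hbal : F 1 = F (-1)) (hδ : 0 < δ) :
    ∃ R > 0, ∀ p, (∀ q ∈ ball p R, 0 < U q) → |U p - 1| ≤ δ := by
  have hF_reflect (s : ℝ) : HasDerivAt (fun s => F (-s)) (-f (-s)) s :=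
    hasDerivAt_comp_neg (hF (-s))
  obtain ⟨R, hR, hle⟩ := hU.reflect.exists_abs_add_one_le (neg_ne_zero.2 hc) hf.reflect hF_reflect
    (by simp [hbal]) hδ
  refine ⟨R, hR, fun p hp => ?_⟩
  have h := hle (p.1, -p.2) fun q hq => neg_lt_zero.2 (hp _ ?_)
  · rwa [neg_neg, neg_add_eq_sub, abs_sub_comm] at h
  · rw [mem_ball, Prod.dist_eq] at hq ⊢
    rwa [← dist_neg_neg (-q.2), neg_neg]

end MonotoneFront

end FarFromZeroLevelSet

section ExponentialDecay

variable {X : Type*} [PseudoMetricSpace X] {s s₁ s₂ : Set X} {g h : X → ℝ} {B C K R r ν : ℝ}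

/-- Upper bound `g ≲ exp (-ν dist(·, s))` for some `ν > 0`. Since `infDist p ∅ = 0`, for empty `s`
this only says that `g` is bounded above. -/
def HasExpDecayAwayFrom (s : Set X) (g : X → ℝ) : Prop :=
  ∃ C > 0, ∃ ν > 0, ∀ p, g p ≤ C * exp (-(ν * infDist p s))

namespace HasExpDecayAwayFrom

theorem of_far (hν : 0 < ν) (hB : ∀ p, g p ≤ B)
    (hfar : ∀ p, R ≤ infDist p s → g p ≤ C * exp (-(ν * (infDist p s - R)))) :
    HasExpDecayAwayFrom s g := by
  refine ⟨max (max B C) 1 * exp (ν * R), by positivity, ν, hν, fun p => ?_⟩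
  rw [mul_assoc, ← exp_add, show ν * R + -(ν * infDist p s) = -(ν * (infDist p s - R)) by ring]
  rcases le_total R (infDist p s) with hp | hp
  · refine (hfar p hp).trans ?_
    gcongr
    exact (le_max_right B C).trans (le_max_left _ _)
  · calc g p ≤ max (max B C) 1 :=
          (hB p).trans ((le_max_left B C).trans (le_max_left _ _))
      _ ≤ _ := le_mul_of_one_le_right (by positivity)
          (one_le_exp (neg_nonneg.2 (mul_nonpos_of_nonneg_of_nonpos hν.le (sub_nonpos.2 hp))))

theorem of_forall_mem_closedBall (hh : HasExpDecayAwayFrom s h) (hK : 0 ≤ K)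
    (hg : ∀ p M, (∀ q ∈ closedBall p r, h q ≤ M) → g p ≤ K * M) : HasExpDecayAwayFrom s g := by
  obtain ⟨C, hC, ν, hν, hle⟩ := hh
  refine ⟨(K + 1) * C * exp (ν * r), by positivity, ν, hν, fun p => ?_⟩
  have hball : ∀ q ∈ closedBall p r, h q ≤ C * exp (ν * r) * exp (-(ν * infDist p s)) := by
    intro q hq
    have hdist : infDist p s ≤ infDist q s + r :=
      infDist_le_infDist_add_dist.trans (by gcongr; exact mem_closedBall'.1 hq)
    refine (hle q).trans ?_
    rw [mul_assoc, ← exp_add]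
    gcongr
    nlinarith
  refine (hg p _ hball).trans ?_
  rw [mul_assoc (K + 1), mul_assoc (K + 1)]
  gcongr
  linarith

theorem mono (hh : HasExpDecayAwayFrom s h) (hK : 0 ≤ K) (hle : ∀ p, g p ≤ K * h p) :
    HasExpDecayAwayFrom s g :=
  hh.of_forall_mem_closedBall (r := 0) hK fun p _ hM =>
    (hle p).trans (mul_le_mul_of_nonneg_left (hM p (mem_closedBall_self le_rfl)) hK)

theorem of_infDist_le_or_infDist_le (h₁ : HasExpDecayAwayFrom s₁ g)
    (h₂ : HasExpDecayAwayFrom s₂ g)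
    (hs : ∀ p, infDist p s ≤ infDist p s₁ ∨ infDist p s ≤ infDist p s₂) :
    HasExpDecayAwayFrom s g := by
  obtain ⟨C₁, hC₁, ν₁, hν₁, hle₁⟩ := h₁
  obtain ⟨C₂, -, ν₂, hν₂, hle₂⟩ := h₂
  refine ⟨max C₁ C₂, by positivity, min ν₁ ν₂, by positivity, fun p => ?_⟩
  rcases hs p with hp | hp
  · refine (hle₁ p).trans ?_
    gcongr
    exacts [le_max_left _ _, infDist_nonneg, min_le_left _ _]
  · refine (hle₂ p).trans ?_
    gcongr
    exacts [le_max_right _ _, infDist_nonneg, min_le_right _ _]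

theorem add (hg : HasExpDecayAwayFrom s g) (hh : HasExpDecayAwayFrom s h) :
    HasExpDecayAwayFrom s fun p => g p + h p := by
  obtain ⟨C₁, hC₁, ν₁, hν₁, hle₁⟩ := hg
  obtain ⟨C₂, hC₂, ν₂, hν₂, hle₂⟩ := hh
  refine ⟨C₁ + C₂, by positivity, min ν₁ ν₂, by positivity, fun p => ?_⟩
  rw [add_mul]
  refine add_le_add ((hle₁ p).trans ?_) ((hle₂ p).trans ?_) <;> gcongr
  exacts [infDist_nonneg, min_le_left _ _, infDist_nonneg, min_le_right _ _]

end HasExpDecayAwayFrom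

end ExponentialDecay

namespace BoundedSolution

variable {f : ℝ → ℝ} {a c : ℝ} {s : Set (ℝ × ℝ)} {U : ℝ × ℝ → ℝ}

theorem hasExpDecayAwayFrom_abs_sub (hU : BoundedSolution f c U) (ha : f a = 0)
    (ha' : 0 < deriv f a) (hfar : ∀ δ > 0, ∃ R, ∀ p, R ≤ infDist p s → |U p - a| ≤ δ) :
    HasExpDecayAwayFrom s fun p => |U p - a| := by
  have hderiv := (hU.contDiff_nonlinearity.differentiable (by norm_num) a).hasDerivAt
  obtain ⟨κ, hκ, δ, hδ, hf⟩ := exists_mul_sq_le_of_hasDerivAt_pos hderiv ha ha'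
  obtain ⟨ν, hν, hνκ⟩ := exists_pos_sq_add_mul_le hκ c
  obtain ⟨R, hR⟩ := hfar δ hδ
  obtain ⟨B, -, hB⟩ := hU.exists_abs_comp_le (continuous_sub_right a)
  refine .of_far (R := R) hν hB fun p hp =>
    hU.abs_sub_le_exp hf hν hνκ (sub_nonneg.2 hp) fun q hq => hR q ?_
  have hdist : infDist p s ≤ infDist q s + dist p q := infDist_le_infDist_add_dist
  linarith [mem_closedBall'.1 hq]

theorem hasExpDecayAwayFrom_norm_fderiv_dirDeriv (hU : BoundedSolution f c U)
    (hdecay : HasExpDecayAwayFrom s fun p => ‖fderiv ℝ U p‖) {e : ℝ × ℝ} (he : ‖e‖ ≤ 1) :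
    HasExpDecayAwayFrom s fun p => ‖fderiv ℝ (dirDeriv e U) p‖ := by
  obtain ⟨K, hK, hbound⟩ := hU.exists_norm_fderiv_dirDeriv_le_mul
  exact hdecay.of_forall_mem_closedBall hK.le fun p M hM =>
    hbound e p M fun q hq => (abs_dirDeriv_le he U q).trans (hM q hq)

theorem hasExpDecayAwayFrom_of_far (hU : BoundedSolution f c U) (ha : f a = 0)
    (ha' : 0 < deriv f a) (hfar : ∀ δ > 0, ∃ R, ∀ p, R ≤ infDist p s → |U p - a| ≤ δ) :
    HasExpDecayAwayFrom s fun p =>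
      |U p ^ 2 - a ^ 2| + ‖iteratedFDeriv ℝ 1 U p‖ + ‖iteratedFDeriv ℝ 2 U p‖ := by
  have hvalue := hU.hasExpDecayAwayFrom_abs_sub ha ha' hfar
  obtain ⟨L, hL, hLU⟩ := hU.exists_abs_comp_le (continuous_add_const a)
  have hsq : HasExpDecayAwayFrom s fun p => |U p ^ 2 - a ^ 2| :=
    hvalue.mono hL.le fun p => by
      rw [sq_sub_sq, abs_mul]
      exact mul_le_mul_of_nonneg_right (hLU p) (abs_nonneg _)
  obtain ⟨K, hK, hbound⟩ := hU.exists_norm_fderiv_le_mul ha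
  have hgrad : HasExpDecayAwayFrom s fun p => ‖fderiv ℝ U p‖ :=
    hvalue.of_forall_mem_closedBall hK.le hbound
  have hhess : HasExpDecayAwayFrom s fun p => ‖iteratedFDeriv ℝ 2 U p‖ :=
    ((hU.hasExpDecayAwayFrom_norm_fderiv_dirDeriv hgrad (e := (1, 0)) (by simp)).add
      (hU.hasExpDecayAwayFrom_norm_fderiv_dirDeriv hgrad (e := (0, 1)) (by simp))).mono zero_le_one
      fun p => (norm_iteratedFDeriv_two_le hU.contDiff_two p).trans_eq (one_mul _).symm
  simpa only [norm_iteratedFDeriv_one] using (hsq.add hgrad).add hhess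

end BoundedSolution

theorem infDist_zeros_le_infDist_nonneg {E : Type*} [NormedAddCommGroup E] [NormedSpace ℝ E]
    {g : E → ℝ} (hg : Continuous g) {p : E} (hp : g p ≤ 0) :
    infDist p {q | g q = 0} ≤ infDist p {q | 0 ≤ g q} := by
  rcases {q | 0 ≤ g q}.eq_empty_or_nonempty with hempty | hne
  · have hzero : {q | g q = 0} = ∅ :=
      Set.subset_eq_empty (fun q (hq : g q = 0) => hq.ge) hempty
    rw [hempty, hzero]
  · refine (le_infDist hne).2 fun q hq => ?_
    obtain ⟨z, hz, hz₀⟩ := (convex_segment p q).isPreconnected.intermediate_value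
      (left_mem_segment ℝ p q) (right_mem_segment ℝ p q) hg.continuousOn ⟨hp, hq⟩
    refine (infDist_le_dist_of_mem (s := {q | g q = 0}) hz₀).trans ?_
    rw [← dist_add_dist_of_mem_segment hz]
    exact le_add_of_nonneg_right dist_nonneg

theorem infDist_zeros_le_or_le {E : Type*} [NormedAddCommGroup E] [NormedSpace ℝ E] {g : E → ℝ}
    (hg : Continuous g) (p : E) :
    infDist p {q | g q = 0} ≤ infDist p {q | 0 ≤ g q} ∨
      infDist p {q | g q = 0} ≤ infDist p {q | g q ≤ 0} := by
  refine (le_total (g p) 0).imp (infDist_zeros_le_infDist_nonneg hg) fun hp => ?_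
  simpa only [Pi.neg_apply, neg_eq_zero, neg_nonneg] using
    infDist_zeros_le_infDist_nonneg hg.neg (neg_nonpos.2 hp)

theorem exponential_decay_from_level_set_general {f F : ℝ → ℝ} {c : ℝ} {U : ℝ × ℝ → ℝ}
    (hU : MonotoneFront f c U) (hc : c ≠ 0) (hf : Bistable f) (hF : ∀ s, HasDerivAt F (f s) s)
    (hbal : F 1 = F (-1)) :
    HasExpDecayAwayFrom {q | U q = 0} fun p =>
      |U p ^ 2 - 1| + ‖iteratedFDeriv ℝ 1 U p‖ + ‖iteratedFDeriv ℝ 2 U p‖ := by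
  have hneg := hU.hasExpDecayAwayFrom_of_far (s := {q | 0 ≤ U q}) hf.map_neg_one
    hf.deriv_neg_one_pos fun δ hδ => by
      obtain ⟨R, -, hR⟩ := hU.exists_abs_add_one_le hc hf hF hbal hδ
      exact ⟨R, fun p hp => (sub_neg_eq_add (U p) 1).symm ▸ hR p fun q hq => not_le.1
        (notMem_of_dist_lt_infDist (s := {q | 0 ≤ U q}) ((mem_ball'.1 hq).trans_le hp))⟩
  have hpos := hU.hasExpDecayAwayFrom_of_far (s := {q | U q ≤ 0}) hf.map_one
    hf.deriv_one_pos fun δ hδ => by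
      obtain ⟨R, -, hR⟩ := hU.exists_abs_sub_one_le hc hf hF hbal hδ
      exact ⟨R, fun p hp => hR p fun q hq => not_le.1
        (notMem_of_dist_lt_infDist (s := {q | U q ≤ 0}) ((mem_ball'.1 hq).trans_le hp))⟩
  rw [neg_one_sq] at hneg
  rw [one_pow] at hpos
  exact hneg.of_infDist_le_or_infDist_le hpos (infDist_zeros_le_or_le hU.contDiff.continuous)

theorem BalancedDoubleWell.bistable_deriv {F : ℝ → ℝ} (hF : BalancedDoubleWell F) :
    Bistable (deriv F) := by
  obtain ⟨-, hneg_one, hone, hderiv_neg_one, hderiv_one, hpos, hneg, -, -⟩ := hF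
  exact ⟨hneg_one, hone, hderiv_neg_one, hderiv_one, hpos, hneg⟩

theorem IsTravelingWave.monotoneFront {F : ℝ → ℝ} {c : ℝ} {u : ℝ → ℝ → ℝ}
    (hu : IsTravelingWave F c u) (hF : ContDiff ℝ 2 F) :
    MonotoneFront (deriv F) c fun q : ℝ × ℝ => u q.1 q.2 := by
  obtain ⟨⟨hsmooth, hpde, hbdd, hmono⟩, htop, hbot⟩ := hu
  have hdiff := hsmooth.differentiable (by norm_num)
  have hdiff' (e : ℝ × ℝ) := differentiable_dirDeriv (hsmooth.of_le (by norm_num)) e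
  have hx (x y : ℝ) : pdx u x y = ∂₁ (fun q : ℝ × ℝ => u q.1 q.2) (x, y) :=
    (hasDerivAt_prodMk_left hdiff x y).deriv
  have hy (x y : ℝ) : pdy u x y = ∂₂ (fun q : ℝ × ℝ => u q.1 q.2) (x, y) :=
    (hasDerivAt_prodMk_right hdiff x y).deriv
  have hxx (x y : ℝ) : pdxx u x y = ∂₁ (∂₁ fun q : ℝ × ℝ => u q.1 q.2) (x, y) := by
    simp only [pdxx, hx, (hasDerivAt_prodMk_left (hdiff' _) x y).deriv]
  have hyy (x y : ℝ) : pdyy u x y = ∂₂ (∂₂ fun q : ℝ × ℝ => u q.1 q.2) (x, y) := by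
    simp only [pdyy, hy, (hasDerivAt_prodMk_right (hdiff' _) x y).deriv]
  exact
    { contDiff := hsmooth
      contDiff_nonlinearity := (contDiff_succ_iff_deriv (n := 1).1 hF).2.2
      pde := fun p => by rw [driftLaplacian, ← hxx, ← hyy, ← hy, hpde]
      bounded := ⟨1, fun p => hbdd p.1 p.2⟩
      dirDeriv_snd_nonneg := fun p => hy p.1 p.2 ▸ (hmono p.1 p.2).le
      tendsto_atTop := htop
      tendsto_atBot := hbot }

/-- Exponential decay of `u` and its derivatives away from the zero level set
(Lemma 2.4). -/
theorem exponential_decay_from_level_set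
    (F : ℝ → ℝ) (hF : BalancedDoubleWell F) (c : ℝ) (hc : 0 < c)
    (u : ℝ → ℝ → ℝ) (hu : IsTravelingWave F c u) :
    ∃ C > (0 : ℝ), ∃ ν > (0 : ℝ), ∀ p : ℝ × ℝ,
      |(u p.1 p.2) ^ 2 - 1| +
        ‖iteratedFDeriv ℝ 1 (fun q : ℝ × ℝ => u q.1 q.2) p‖ +
        ‖iteratedFDeriv ℝ 2 (fun q : ℝ × ℝ => u q.1 q.2) p‖ ≤
      C * Real.exp (-(ν * Metric.infDist p {q : ℝ × ℝ | u q.1 q.2 = 0})) := by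
  have ⟨hsmooth, _, _, _, _, _, _, hF_neg_one, hF_one⟩ := hF
  exact exponential_decay_from_level_set_general (hu.monotoneFront (hsmooth.of_le (by norm_num)))
    hc.ne' hF.bistable_deriv (fun s => (hsmooth.differentiable (by norm_num) s).hasDerivAt)
    (hF_one.trans hF_neg_one.symm)
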